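/- There exists a nonempty computable closed subset K of [0,1]² ⊆ ℝ² such that the subspace K is contractible, and there is a real ε > 0 such that every nonempty Π⁰₁ closed set B ⊆ K which is connected and locally connected satisfies d_H(B, K) ≥ ε (so K *-includes no nonempty connected, locally connected Π⁰₁ subset). -/

import Mathlib

open Set Metric

section TopDefs

variable {α : Type*} [TopologicalSpace α]

/-- `A ⊆ α` is an arc with endpoints `x` and `y`:
a homeomorphic (continuous injective) image of `[0,1]` sending `0 ↦ x`, `1 ↦ y`. -/
def IsArc (A : Set α) (x y : α) : Prop :=
  ∃ f : Set.Icc (0:ℝ) 1 → α, Continuous f ∧ Function.Injective f ∧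
    Set.range f = A ∧ f ⟨0, by norm_num⟩ = x ∧ f ⟨1, by norm_num⟩ = y

/-- A continuum: a nonempty compact connected set. -/
def IsContinuum (X : Set α) : Prop := IsCompact X ∧ IsConnected X

/-- Any two distinct points of `X` are endpoints of an arc contained in `X`. -/
def ArcwiseConnectedSet (X : Set α) : Prop :=
  ∀ x ∈ X, ∀ y ∈ X, x ≠ y → ∃ A, A ⊆ X ∧ IsArc A x y

/-- `X` is unicoherent: for all closed connected `A, B ⊆ X` with `A ∪ B = X`,
the intersection `A ∩ B` is connected. -/
def UnicoherentSet (X : Set α) : Prop :=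
  ∀ A B : Set α, A ⊆ X → B ⊆ X → IsClosed A → IsClosed B →
    IsConnected A → IsConnected B → A ∪ B = X → IsConnected (A ∩ B)

/-- Every subcontinuum of `X` is unicoherent. -/
def HereditarilyUnicoherent (X : Set α) : Prop :=
  ∀ Y, Y ⊆ X → IsContinuum Y → UnicoherentSet Y

/-- A dendroid: an arcwise connected, hereditarily unicoherent continuum. -/
def IsDendroid (X : Set α) : Prop :=
  IsContinuum X ∧ ArcwiseConnectedSet X ∧ HereditarilyUnicoherent X

/-- The unit circle `S¹`. -/
def unitCircle : Set (EuclideanSpace ℝ (Fin 2)) := Metric.sphere 0 1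

/-- A dendrite: a locally connected continuum containing no subset homeomorphic to `S¹`. -/
def IsDendrite (X : Set α) : Prop :=
  IsContinuum X ∧ LocallyConnectedSpace ↥X ∧
    ∀ S : Set α, S ⊆ X → IsEmpty (↥S ≃ₜ ↥unitCircle)

/-- `x` and `y` lie in the same arc-component of `Y`. -/
def SameArcComponent (Y : Set α) (x y : α) : Prop :=
  x = y ∨ ∃ A, A ⊆ Y ∧ IsArc A x y

/-- `x` is a ramification point of `X`: `X \ {x}` has at least three arc-components. -/
def IsRamificationPoint (X : Set α) (x : α) : Prop :=
  x ∈ X ∧ ∃ u v w, u ∈ X \ {x} ∧ v ∈ X \ {x} ∧ w ∈ X \ {x} ∧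
    ¬ SameArcComponent (X \ {x}) u v ∧ ¬ SameArcComponent (X \ {x}) u w ∧
    ¬ SameArcComponent (X \ {x}) v w

/-- A tree (as a continuum): a dendrite with finitely many ramification points. -/
def IsTreeContinuum (X : Set α) : Prop :=
  IsDendrite X ∧ {x | IsRamificationPoint X x}.Finite

end TopDefs

section CompDefs

/-- The rational open ball in `ℝ²` coded by `((q₁, q₂), r)`. -/
def ballOfCode (c : (ℚ × ℚ) × ℚ) : Set (ℝ × ℝ) :=
  {x | dist x (((c.1.1 : ℝ), (c.1.2 : ℝ)) : ℝ × ℝ) < (c.2 : ℝ)}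

/-- A closed set `F ⊆ ℝ²` is `Π⁰₁` if it is the complement of the union of the rational
open balls coded by some c.e. set of codes. -/
def IsPi01Closed (F : Set (ℝ × ℝ)) : Prop :=
  ∃ W : (ℚ × ℚ) × ℚ → Prop, REPred W ∧ F = Set.univ \ ⋃ c ∈ {c | W c}, ballOfCode c

/-- `F ⊆ ℝ²` is c.e. closed if the set of codes of rational open balls meeting `F` is c.e. -/
def IsCEClosed (F : Set (ℝ × ℝ)) : Prop :=
  REPred (fun c : (ℚ × ℚ) × ℚ => (F ∩ ballOfCode c).Nonempty)

/-- A computable closed subset of `ℝ²`: both `Π⁰₁` and c.e. closed. -/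
def IsComputableClosed (F : Set (ℝ × ℝ)) : Prop :=
  IsPi01Closed F ∧ IsCEClosed F

/-- A point of `ℝ²` is computable if the set of codes of rational open balls
containing it is c.e. -/
def IsComputablePoint (x : ℝ × ℝ) : Prop :=
  REPred (fun c : (ℚ × ℚ) × ℚ => x ∈ ballOfCode c)

end CompDefs

section PsiDefs

/-- A tree of binary strings: a set of finite binary strings closed under prefixes. -/
def IsTreeOfStrings (T : Set (List Bool)) : Prop :=
  ∀ σ ∈ T, ∀ τ : List Bool, τ <+: σ → τ ∈ T

/-- The point `ψ(σ) ∈ ℝ²` associated with the binary string `σ`. -/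
noncomputable def psiPt (σ : List Bool) : ℝ × ℝ :=
  ((3:ℝ) ^ (-(σ.length : ℤ)) / 2 +
      2 * ∑ i ∈ Finset.range σ.length,
        (if σ.getD i false then (3:ℝ) ^ (-((i : ℤ) + 1)) else 0),
    (2:ℝ) ^ (-(σ.length : ℤ)))

/-- The planar embedding `Ψ(T)` of a tree `T` of binary strings: the closure of the union
of the segments from `ψ(σ⁻)` to `ψ(σ)` over nonempty `σ ∈ T` (together with the points
`ψ(σ)`, `σ ∈ T`, which makes no difference except for the degenerate trees `∅`, `{⟨⟩}`). -/
noncomputable def PsiSet (T : Set (List Bool)) : Set (ℝ × ℝ) :=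
  closure (psiPt '' T ∪ ⋃ σ ∈ T, ⋃ (_ : σ ≠ []), segment ℝ (psiPt σ.dropLast) (psiPt σ))

end PsiDefs


section RatComp

/-- the old encoding of a rational -/
def oldEnc (q : ℚ) : ℕ := @Encodable.encode ℚ Rat.instEncodable q

theorem oldEnc_eq (q : ℚ) : oldEnc q = Nat.pair (Equiv.intEquivNat q.num) q.den := by
  rfl

theorem intEnc_even (n : ℕ) : Equiv.intEquivNat (n : ℤ) = 2 * n := rfl
theorem intEnc_odd (n : ℕ) : Equiv.intEquivNat (Int.negSucc n) = 2 * n + 1 := rfl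

def codePos (z : ℕ) : ℕ := if z % 2 = 0 then z / 2 else 0
def codeNeg (z : ℕ) : ℕ := if z % 2 = 0 then 0 else z / 2 + 1

theorem parts_int (a : ℤ) : ((codePos (Equiv.intEquivNat a) : ℤ) - codeNeg (Equiv.intEquivNat a)) = a := by
  rcases a with n | n
  · have := intEnc_even n
    simp only [Int.ofNat_eq_natCast, this, codePos, codeNeg]
    simp
  · rw [intEnc_odd]
    simp only [codePos, codeNeg]
    have h : (2 * n + 1) % 2 = 1 := by omega
    have h2 : (2 * n + 1) / 2 = n := by omega
    simp [h, h2]; omega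

theorem oldEnc_inj : Function.Injective oldEnc := @Encodable.encode_injective ℚ Rat.instEncodable

/-- The range of the old encoding. -/
def oldRange : Set ℕ := Set.range oldEnc

theorem mem_oldRange (m : ℕ) : m ∈ oldRange ↔
    0 < m.unpair.2 ∧ ∀ d < codePos m.unpair.1 + codeNeg m.unpair.1 + m.unpair.2 + 1,
      (codePos m.unpair.1 + codeNeg m.unpair.1) % d = 0 → m.unpair.2 % d = 0 → d = 1 := by
  have key : ∀ a b : ℕ, 0 < b → ((∀ d < a + b + 1, a % d = 0 → b % d = 0 → d = 1) ↔ a.Coprime b) := by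
    intro a b hb
    constructor
    · intro h
      apply h (a.gcd b)
      · have := Nat.gcd_le_right a hb; omega
      · exact Nat.mod_eq_zero_of_dvd (Nat.gcd_dvd_left a b)
      · exact Nat.mod_eq_zero_of_dvd (Nat.gcd_dvd_right a b)
    · intro h d _ h1 h2
      exact Nat.eq_one_of_dvd_coprimes h (Nat.dvd_of_mod_eq_zero h1) (Nat.dvd_of_mod_eq_zero h2)
  have habs : ∀ a : ℤ, codePos (Equiv.intEquivNat a) + codeNeg (Equiv.intEquivNat a) = a.natAbs := by
    intro a
    have h1 := parts_int a
    have h2 : codePos (Equiv.intEquivNat a) = 0 ∨ codeNeg (Equiv.intEquivNat a) = 0 := by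
      unfold codePos codeNeg; split_ifs <;> simp
    omega
  constructor
  · rintro ⟨q, rfl⟩
    rw [oldEnc_eq, Nat.unpair_pair]
    refine ⟨q.den_pos, ?_⟩
    simp only []
    rw [habs, key _ _ q.den_pos]
    exact q.reduced
  · rintro ⟨h1, h2⟩
    rw [key _ _ h1] at h2
    obtain ⟨a, ha⟩ := Equiv.intEquivNat.surjective m.unpair.1
    rw [← ha, habs] at h2
    refine ⟨⟨a, m.unpair.2, h1.ne', h2⟩, ?_⟩
    rw [oldEnc_eq]
    simp only [ha, Nat.pair_unpair]

theorem primrec_codePos : Primrec codePos :=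
  Primrec.ite (Primrec.eq.comp (Primrec.nat_mod.comp Primrec.id (Primrec.const 2)) (Primrec.const 0))
    (Primrec.nat_div.comp Primrec.id (Primrec.const 2)) (Primrec.const 0)
theorem primrec_codeNeg : Primrec codeNeg :=
  Primrec.ite (Primrec.eq.comp (Primrec.nat_mod.comp Primrec.id (Primrec.const 2)) (Primrec.const 0))
    (Primrec.const 0) (Primrec.succ.comp (Primrec.nat_div.comp Primrec.id (Primrec.const 2)))

theorem primrec_imp {α} [Primcodable α] {p q : α → Prop} (hp : PrimrecPred p) (hq : PrimrecPred q) :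
    PrimrecPred fun a => p a → q a := (hp.not.or hq).of_eq fun a => by tauto

theorem primrecPred_oldRange : PrimrecPred (fun m => m ∈ oldRange) := by
  have u1 : Primrec fun m : ℕ => m.unpair.1 := Primrec.fst.comp Primrec.unpair
  have u2 : Primrec fun m : ℕ => m.unpair.2 := Primrec.snd.comp Primrec.unpair
  have ha : Primrec fun m : ℕ => codePos m.unpair.1 + codeNeg m.unpair.1 :=
    Primrec.nat_add.comp (primrec_codePos.comp u1) (primrec_codeNeg.comp u1)
  have hR : PrimrecRel (fun (d m : ℕ) => (codePos m.unpair.1 + codeNeg m.unpair.1) % d = 0 →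
      m.unpair.2 % d = 0 → d = 1) := by
    apply primrec_imp
    · exact Primrec.eq.comp (Primrec.nat_mod.comp (ha.comp Primrec.snd) Primrec.fst) (Primrec.const 0)
    apply primrec_imp
    · exact Primrec.eq.comp (Primrec.nat_mod.comp (u2.comp Primrec.snd) Primrec.fst) (Primrec.const 0)
    · exact Primrec.eq.comp Primrec.fst (Primrec.const 1)
  have hb := hR.forall_lt
  have hc : PrimrecPred (fun m : ℕ => ∀ d < codePos m.unpair.1 + codeNeg m.unpair.1 + m.unpair.2 + 1,
      (codePos m.unpair.1 + codeNeg m.unpair.1) % d = 0 → m.unpair.2 % d = 0 → d = 1) :=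
    hb.comp (Primrec.succ.comp (Primrec.nat_add.comp ha u2)) Primrec.id
  refine ((Primrec.nat_lt.comp (Primrec.const 0) u2).and hc).of_eq fun m => ?_
  rw [mem_oldRange]

theorem oldEnc_ofNat_zero (m : ℕ) (hm : m ∈ oldRange) : oldEnc (Denumerable.ofNat ℚ 0) ≤ m := by
  classical
  let : Infinite (Set.range (@Encodable.encode ℚ Rat.instEncodable)) :=
    Infinite.of_injective _ (Equiv.ofInjective _ (@Encodable.encode_injective ℚ Rat.instEncodable)).injective
  let := @Encodable.decidableRangeEncode ℚ Rat.instEncodable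
  have : Denumerable.ofNat ℚ 0 = (@Encodable.equivRangeEncode ℚ Rat.instEncodable).symm
    (Nat.Subtype.ofNat (Set.range (@Encodable.encode ℚ Rat.instEncodable)) 0) := rfl
  have h2 : (@Encodable.equivRangeEncode ℚ Rat.instEncodable) (Denumerable.ofNat ℚ 0) =
    (Nat.Subtype.ofNat (Set.range (@Encodable.encode ℚ Rat.instEncodable)) 0) := by
    rw [this, Equiv.apply_symm_apply]
  have h3 : oldEnc (Denumerable.ofNat ℚ 0) = ((@Encodable.equivRangeEncode ℚ Rat.instEncodable) (Denumerable.ofNat ℚ 0)).1 := rfl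
  rw [h3, h2]
  have : (⊥ : Set.range (@Encodable.encode ℚ Rat.instEncodable)) ≤ ⟨m, hm⟩ := bot_le
  exact this

theorem oldEnc_ofNat_succ (n m : ℕ) (hm : m ∈ oldRange) :
    oldEnc (Denumerable.ofNat ℚ n) < oldEnc (Denumerable.ofNat ℚ (n+1)) ∧
    (oldEnc (Denumerable.ofNat ℚ n) < m → oldEnc (Denumerable.ofNat ℚ (n+1)) ≤ m) := by
  classical
  let : Infinite (Set.range (@Encodable.encode ℚ Rat.instEncodable)) :=
    Infinite.of_injective _ (Equiv.ofInjective _ (@Encodable.encode_injective ℚ Rat.instEncodable)).injective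
  let := @Encodable.decidableRangeEncode ℚ Rat.instEncodable
  have key : ∀ n, oldEnc (Denumerable.ofNat ℚ n) =
      (Nat.Subtype.ofNat (Set.range (@Encodable.encode ℚ Rat.instEncodable)) n : ℕ) := by
    intro n
    have : Denumerable.ofNat ℚ n = (@Encodable.equivRangeEncode ℚ Rat.instEncodable).symm
      (Nat.Subtype.ofNat (Set.range (@Encodable.encode ℚ Rat.instEncodable)) n) := rfl
    have h2 : (@Encodable.equivRangeEncode ℚ Rat.instEncodable) (Denumerable.ofNat ℚ n) =
      (Nat.Subtype.ofNat (Set.range (@Encodable.encode ℚ Rat.instEncodable)) n) := by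
      rw [this, Equiv.apply_symm_apply]
    have h3 : oldEnc (Denumerable.ofNat ℚ n) = ((@Encodable.equivRangeEncode ℚ Rat.instEncodable) (Denumerable.ofNat ℚ n)).1 := rfl
    rw [h3, h2]
  rw [key, key]
  refine ⟨Nat.Subtype.lt_succ_self _, fun h => ?_⟩
  exact Nat.Subtype.succ_le_of_lt (s := Set.range (@Encodable.encode ℚ Rat.instEncodable)) (x := ⟨m, hm⟩) h

theorem exists_next (x : ℕ) : ∃ m, x < m ∧ m ∈ oldRange := by
  have h : (Set.range oldEnc).Infinite := Set.infinite_range_of_injective oldEnc_inj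
  obtain ⟨m, h1, h2⟩ := h.exists_gt x
  exact ⟨m, h2, h1⟩

theorem computable_oldEnc_ofNat : Computable (fun n => oldEnc (Denumerable.ofNat ℚ n)) := by
  classical
  have hP : ComputablePred (fun p : ℕ × ℕ => p.1 < p.2 ∧ p.2 ∈ oldRange) :=
    ((Primrec.nat_lt.comp Primrec.fst Primrec.snd).and (primrecPred_oldRange.comp Primrec.snd)).computablePred
  have hn : Computable (fun x => Nat.find (exists_next x)) :=
    Computable.find (P := fun x m => x < m ∧ m ∈ oldRange) hP exists_next
  have := Computable.nat_rec (α := ℕ) (σ := ℕ) (f := id) (g := fun _ => oldEnc (Denumerable.ofNat ℚ 0))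
    (h := fun _ p => Nat.find (exists_next p.2)) Computable.id (Computable.const _)
    ((hn.comp (Computable.snd.comp Computable.snd)).to₂)
  refine this.of_eq fun n => ?_
  simp only [id]
  induction n with
  | zero => rfl
  | succ n ih =>
    simp only [ih]
    have hmem : ∀ k, oldEnc (Denumerable.ofNat ℚ k) ∈ oldRange := fun k => ⟨_, rfl⟩
    apply le_antisymm
    · apply Nat.find_min'
      exact ⟨(oldEnc_ofNat_succ n _ (hmem 0)).1, hmem _⟩
    · have := Nat.find_spec (exists_next (oldEnc (Denumerable.ofNat ℚ n)))
      exact (oldEnc_ofNat_succ n _ this.2).2 this.1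

theorem computable_oldEnc : Computable oldEnc := by
  have h := computable_oldEnc_ofNat.comp (Computable.encode (α := ℚ))
  refine h.of_eq fun q => ?_
  congr 1
  exact Denumerable.ofNat_encode (α := ℚ) q

/-- numerators/denominators as naturals: value `(p.1.1 - p.1.2) / p.2`. -/
def ratParts (q : ℚ) : (ℕ × ℕ) × ℕ :=
  ((codePos (oldEnc q).unpair.1, codeNeg (oldEnc q).unpair.1), (oldEnc q).unpair.2)

def fval (p : (ℕ × ℕ) × ℕ) : ℚ := ((p.1.1 : ℚ) - p.1.2) / p.2

theorem ratParts_den_pos (q : ℚ) : 0 < (ratParts q).2 := by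
  simp only [ratParts, oldEnc_eq, Nat.unpair_pair]; exact q.den_pos

theorem fval_ratParts (q : ℚ) : fval (ratParts q) = q := by
  simp only [ratParts, oldEnc_eq, Nat.unpair_pair, fval]
  have h := parts_int q.num
  have h2 : ((codePos (Equiv.intEquivNat q.num) : ℚ) - codeNeg (Equiv.intEquivNat q.num)) = q.num := by
    exact_mod_cast congrArg (Int.cast : ℤ → ℚ) h
  rw [h2]
  exact Rat.num_div_den q

theorem computable_ratParts : Computable ratParts := by
  have u1 : Computable fun q => (oldEnc q).unpair.1 :=
    Computable.fst.comp (Computable.unpair.comp computable_oldEnc)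
  have u2 : Computable fun q => (oldEnc q).unpair.2 :=
    Computable.snd.comp (Computable.unpair.comp computable_oldEnc)
  exact ((primrec_codePos.to_comp.comp u1).pair (primrec_codeNeg.to_comp.comp u1)).pair u2

def fEq (p r : (ℕ × ℕ) × ℕ) : Prop := p.1.1 * r.2 + r.1.2 * p.2 = r.1.1 * p.2 + p.1.2 * r.2
def fLt (p r : (ℕ × ℕ) × ℕ) : Prop := p.1.1 * r.2 + r.1.2 * p.2 < r.1.1 * p.2 + p.1.2 * r.2

theorem fEq_iff (p r : (ℕ × ℕ) × ℕ) (hp : 0 < p.2) (hr : 0 < r.2) : fEq p r ↔ fval p = fval r := by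
  have hp' : (0:ℚ) < p.2 := by exact_mod_cast hp
  have hr' : (0:ℚ) < r.2 := by exact_mod_cast hr
  unfold fEq fval
  rw [div_eq_div_iff hp'.ne' hr'.ne', ← @Nat.cast_inj ℚ]
  push_cast
  constructor <;> intro h <;> linarith

theorem fLt_iff (p r : (ℕ × ℕ) × ℕ) (hp : 0 < p.2) (hr : 0 < r.2) : fLt p r ↔ fval p < fval r := by
  have hp' : (0:ℚ) < p.2 := by exact_mod_cast hp
  have hr' : (0:ℚ) < r.2 := by exact_mod_cast hr
  unfold fLt fval
  rw [div_lt_div_iff₀ hp' hr', ← @Nat.cast_lt ℚ]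
  push_cast
  constructor <;> intro h <;> linarith

section
variable {α : Type*} [Primcodable α]

theorem primrec_cross {f g : α → (ℕ × ℕ) × ℕ} (hf : Primrec f) (hg : Primrec g) :
    Primrec (fun a => (f a).1.1 * (g a).2 + (g a).1.2 * (f a).2) :=
  Primrec.nat_add.comp
    (Primrec.nat_mul.comp (Primrec.fst.comp (Primrec.fst.comp hf)) (Primrec.snd.comp hg))
    (Primrec.nat_mul.comp (Primrec.snd.comp (Primrec.fst.comp hg)) (Primrec.snd.comp hf))
end

theorem primrec_fEq : PrimrecRel fEq := 
  Primrec.eq.comp (primrec_cross Primrec.fst Primrec.snd) (primrec_cross Primrec.snd Primrec.fst)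

theorem primrec_fLt : PrimrecRel fLt := 
  Primrec.nat_lt.comp (primrec_cross Primrec.fst Primrec.snd) (primrec_cross Primrec.snd Primrec.fst)

theorem ComputablePred.comp' {α β} [Primcodable α] [Primcodable β] {p : β → Prop} {f : α → β}
    (hp : ComputablePred p) (hf : Computable f) : ComputablePred fun a => p (f a) := by
  classical
  exact (hp.decide.comp hf).computablePred

theorem ofNat_rat_surj (q : ℚ) : ∃ n, Denumerable.ofNat ℚ n = q := (Denumerable.eqv ℚ).symm.surjective q

/-- enumeration of the rationals -/
def ratOf (n : ℕ) : ℚ := Denumerable.ofNat ℚ n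

theorem computable_ratOf : Computable ratOf := Computable.ofNat ℚ

theorem ratOf_surj (q : ℚ) : ∃ n, ratOf n = q := ofNat_rat_surj q

theorem fval_def (p : (ℕ × ℕ) × ℕ) : fval p = ((p.1.1 : ℚ) - p.1.2) / p.2 := rfl

attribute [irreducible] ratOf ratParts fEq fLt fval

theorem toRat_ex (p : (ℕ × ℕ) × ℕ) : ∃ n, fEq (ratParts (ratOf n)) (p.1, p.2 + 1) := by
  obtain ⟨n, hn⟩ := ratOf_surj (fval (p.1, p.2+1))
  refine ⟨n, ?_⟩
  rw [fEq_iff _ _ (ratParts_den_pos _) (Nat.succ_pos _), fval_ratParts, hn]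

theorem toRat_pred : ComputablePred (fun x : ((ℕ × ℕ) × ℕ) × ℕ =>
      fEq (ratParts (ratOf x.2)) (x.1.1, x.1.2 + 1)) := by
  have := primrec_fEq.computablePred
  refine ComputablePred.comp' (p := fun x : ((ℕ × ℕ) × ℕ) × ((ℕ × ℕ) × ℕ) => fEq x.1 x.2)
      (f := fun x : ((ℕ × ℕ) × ℕ) × ℕ => (ratParts (ratOf x.2), (x.1.1, x.1.2 + 1))) this ?_
  refine Computable.pair (computable_ratParts.comp (computable_ratOf.comp Computable.snd)) ?_
  exact Computable.pair (Computable.fst.comp Computable.fst)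
      (Computable.succ.comp (Computable.snd.comp Computable.fst))

theorem computable_toRat : Computable (fun p : (ℕ × ℕ) × ℕ => fval (p.1, p.2 + 1)) := by
  classical
  have h1 := Computable.find (P := fun (p : (ℕ × ℕ) × ℕ) (n : ℕ) => fEq (ratParts (ratOf n)) (p.1, p.2 + 1)) toRat_pred toRat_ex
  refine (computable_ratOf.comp h1).of_eq fun p => ?_
  have := Nat.find_spec (toRat_ex p)
  rw [fEq_iff _ _ (ratParts_den_pos _) (Nat.succ_pos _), fval_ratParts] at this
  exact this

end RatComp


section RatComp2
variable {α : Type*} [Primcodable α]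

theorem computable_fval {f : α → (ℕ × ℕ) × ℕ} (hf : Computable f) (hpos : ∀ a, 0 < (f a).2) :
    Computable fun a => fval (f a) := by
  have h1 : Computable fun a => ((f a).1, (f a).2 - 1) :=
    (Computable.fst.comp hf).pair
      ((Primrec.nat_sub.to_comp.comp (Computable.snd.comp hf) (Computable.const 1)))
  refine (computable_toRat.comp h1).of_eq fun a => ?_
  have := hpos a
  simp only [Nat.sub_add_cancel this]

theorem cadd {f g : α → ℕ} (hf : Computable f) (hg : Computable g) :
    Computable fun a => f a + g a := Primrec.nat_add.to_comp.comp hf hg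
theorem cmul {f g : α → ℕ} (hf : Computable f) (hg : Computable g) :
    Computable fun a => f a * g a := Primrec.nat_mul.to_comp.comp hf hg
theorem csub {f g : α → ℕ} (hf : Computable f) (hg : Computable g) :
    Computable fun a => f a - g a := Primrec.nat_sub.to_comp.comp hf hg

theorem cnum {f : α → ℚ} (hf : Computable f) : Computable fun a => (ratParts (f a)).1.1 :=
  Computable.fst.comp (Computable.fst.comp (computable_ratParts.comp hf))
theorem cneg {f : α → ℚ} (hf : Computable f) : Computable fun a => (ratParts (f a)).1.2 :=
  Computable.snd.comp (Computable.fst.comp (computable_ratParts.comp hf))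
theorem cden {f : α → ℚ} (hf : Computable f) : Computable fun a => (ratParts (f a)).2 :=
  Computable.snd.comp (computable_ratParts.comp hf)

theorem ratParts_eq (q : ℚ) :
    ((((ratParts q).1.1 : ℕ) : ℚ) - (((ratParts q).1.2 : ℕ) : ℚ)) / (((ratParts q).2 : ℕ) : ℚ) = q := by
  have := fval_ratParts q
  rwa [fval_def] at this

theorem qadd {f g : α → ℚ} (hf : Computable f) (hg : Computable g) :
    Computable fun a => f a + g a := by
  have h := computable_fval (f := fun a =>
    (((ratParts (f a)).1.1 * (ratParts (g a)).2 + (ratParts (g a)).1.1 * (ratParts (f a)).2,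
      (ratParts (f a)).1.2 * (ratParts (g a)).2 + (ratParts (g a)).1.2 * (ratParts (f a)).2),
      (ratParts (f a)).2 * (ratParts (g a)).2))
    (((cadd (cmul (cnum hf) (cden hg)) (cmul (cnum hg) (cden hf))).pair
      (cadd (cmul (cneg hf) (cden hg)) (cmul (cneg hg) (cden hf)))).pair (cmul (cden hf) (cden hg)))
    (fun a => Nat.mul_pos (ratParts_den_pos _) (ratParts_den_pos _))
  refine h.of_eq fun a => ?_
  have h1 := ratParts_eq (f a)
  have h2 := ratParts_eq (g a)
  have p1 : (((ratParts (f a)).2 : ℕ) : ℚ) ≠ 0 := by exact_mod_cast (ratParts_den_pos (f a)).ne'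
  have p2 : (((ratParts (g a)).2 : ℕ) : ℚ) ≠ 0 := by exact_mod_cast (ratParts_den_pos (g a)).ne'
  rw [fval_def]
  push_cast
  conv_rhs => rw [← h1, ← h2]
  field_simp
  ring

theorem qmul {f g : α → ℚ} (hf : Computable f) (hg : Computable g) :
    Computable fun a => f a * g a := by
  have h := computable_fval (f := fun a =>
    (((ratParts (f a)).1.1 * (ratParts (g a)).1.1 + (ratParts (f a)).1.2 * (ratParts (g a)).1.2,
      (ratParts (f a)).1.1 * (ratParts (g a)).1.2 + (ratParts (f a)).1.2 * (ratParts (g a)).1.1),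
      (ratParts (f a)).2 * (ratParts (g a)).2))
    (((cadd (cmul (cnum hf) (cnum hg)) (cmul (cneg hf) (cneg hg))).pair
      (cadd (cmul (cnum hf) (cneg hg)) (cmul (cneg hf) (cnum hg)))).pair (cmul (cden hf) (cden hg)))
    (fun a => Nat.mul_pos (ratParts_den_pos _) (ratParts_den_pos _))
  refine h.of_eq fun a => ?_
  have h1 := ratParts_eq (f a)
  have h2 := ratParts_eq (g a)
  have p1 : (((ratParts (f a)).2 : ℕ) : ℚ) ≠ 0 := by exact_mod_cast (ratParts_den_pos (f a)).ne'
  have p2 : (((ratParts (g a)).2 : ℕ) : ℚ) ≠ 0 := by exact_mod_cast (ratParts_den_pos (g a)).ne'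
  rw [fval_def]
  push_cast
  conv_rhs => rw [← h1, ← h2]
  field_simp
  ring

theorem qneg {f : α → ℚ} (hf : Computable f) : Computable fun a => - f a := by
  refine (qmul (Computable.const (-1)) hf).of_eq fun a => by ring

theorem qsub {f g : α → ℚ} (hf : Computable f) (hg : Computable g) :
    Computable fun a => f a - g a := by
  refine (qadd hf (qneg hg)).of_eq fun a => by ring

theorem qcast {f : α → ℕ} (hf : Computable f) : Computable fun a => (f a : ℚ) := by
  have h := computable_fval (f := fun a => ((f a, 0), 1))
    ((hf.pair (Computable.const 0)).pair (Computable.const 1)) (fun _ => Nat.one_pos)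
  refine h.of_eq fun a => ?_
  rw [fval_def]; simp

theorem cpow2 {f : α → ℕ} (hf : Computable f) : Computable fun a => 2 ^ f a := by
  have h : Primrec (fun n : ℕ => 2 ^ n) := by
    refine (Primrec.nat_rec₁ (f := fun _ x => x * 2) 1
      ((Primrec.nat_mul.comp Primrec.snd (Primrec.const 2)).to₂)).of_eq fun n => ?_
    induction n with
    | zero => rfl
    | succ n ih => rw [pow_succ, ← ih]
  exact h.to_comp.comp hf

theorem qipow2 {f : α → ℕ} (hf : Computable f) : Computable fun a => ((1 : ℚ) / 2 ^ f a) := by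
  have h := computable_fval (f := fun a => ((1, 0), 2 ^ f a))
    ((Computable.const (1, 0)).pair (cpow2 hf)) (fun _ => by positivity)
  refine h.of_eq fun a => ?_
  rw [fval_def]; simp

theorem qlt {f g : α → ℚ} (hf : Computable f) (hg : Computable g) :
    ComputablePred fun a => f a < g a := by
  refine (ComputablePred.comp' (p := fun x : ((ℕ × ℕ) × ℕ) × ((ℕ × ℕ) × ℕ) => fLt x.1 x.2)
    primrec_fLt.computablePred
    ((computable_ratParts.comp hf).pair (computable_ratParts.comp hg))).of_eq fun a => ?_
  simp only []
  rw [fLt_iff _ _ (ratParts_den_pos _) (ratParts_den_pos _), fval_ratParts, fval_ratParts]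

theorem cpand {p q : α → Prop} (hp : ComputablePred p) (hq : ComputablePred q) :
    ComputablePred fun a => p a ∧ q a := by
  classical
  refine Computable.computablePred ?_
  refine (Primrec.and.to_comp.comp hp.decide hq.decide).of_eq fun a => ?_
  simp

theorem cpor {p q : α → Prop} (hp : ComputablePred p) (hq : ComputablePred q) :
    ComputablePred fun a => p a ∨ q a := by
  classical
  refine Computable.computablePred ?_
  refine (Primrec.or.to_comp.comp hp.decide hq.decide).of_eq fun a => ?_
  simp

theorem cpnot {p : α → Prop} (hp : ComputablePred p) : ComputablePred fun a => ¬ p a := hp.not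

theorem cpimp {p q : α → Prop} (hp : ComputablePred p) (hq : ComputablePred q) :
    ComputablePred fun a => p a → q a :=
  (cpor (cpnot hp) hq).of_eq fun a => by tauto

theorem qle {f g : α → ℚ} (hf : Computable f) (hg : Computable g) :
    ComputablePred fun a => f a ≤ g a :=
  (cpnot (qlt hg hf)).of_eq fun a => not_lt

open Classical in
theorem cite {σ : Type*} [Primcodable σ] {p : α → Prop} {f g : α → σ} (hp : ComputablePred p)
    (hf : Computable f) (hg : Computable g) : Computable fun a => if p a then f a else g a := by
  refine (Computable.cond hp.decide hf hg).of_eq fun a => ?_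
  by_cases h : p a <;> simp [h]

theorem qmin {f g : α → ℚ} (hf : Computable f) (hg : Computable g) :
    Computable fun a => min (f a) (g a) := by
  classical
  refine (cite (qle hf hg) hf hg).of_eq fun a => ?_
  rw [min_def]
  congr

theorem qmax {f g : α → ℚ} (hf : Computable f) (hg : Computable g) :
    Computable fun a => max (f a) (g a) := by
  classical
  refine (cite (qle hf hg) hg hf).of_eq fun a => ?_
  rw [max_def]
  congr

theorem qabs {f : α → ℚ} (hf : Computable f) : Computable fun a => |f a| :=
  qmax hf (qneg hf)

theorem cpforall {p : α → ℕ → Prop} {N : α → ℕ} (hp : ComputablePred fun x : α × ℕ => p x.1 x.2)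
    (hN : Computable N) : ComputablePred fun a => ∀ k < N a, p a k := by
  classical
  refine Computable.computablePred ?_
  have h : Computable₂ (fun (a : α) (x : ℕ × Bool) => decide (p a x.1) && x.2) :=
    (Primrec.and.to_comp.comp (hp.decide.comp (Computable.fst.pair
      (Computable.fst.comp Computable.snd))) (Computable.snd.comp Computable.snd)).to₂
  refine (Computable.nat_rec hN (Computable.const true) h).of_eq fun a => ?_
  induction N a with
  | zero => simp
  | succ n ih =>
    simp only [ih]
    rw [← Bool.decide_and]
    apply decide_eq_decide.2
    simp only [Nat.lt_succ_iff_lt_or_eq]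
    constructor
    · rintro ⟨h1, h2⟩ k (hk | rfl)
      · exact h2 k hk
      · exact h1
    · exact fun h => ⟨h n (Or.inr rfl), fun k hk => h k (Or.inl hk)⟩

theorem cpexists {p : α → ℕ → Prop} {N : α → ℕ} (hp : ComputablePred fun x : α × ℕ => p x.1 x.2)
    (hN : Computable N) : ComputablePred fun a => ∃ k < N a, p a k :=
  (cpnot (cpforall (p := fun a k => ¬ p a k) (cpnot hp) hN)).of_eq fun a => by
    push Not; rfl

theorem re_exists {p : α → ℕ → Prop} (hp : ComputablePred fun x : α × ℕ => p x.1 x.2) :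
    REPred fun a => ∃ k, p a k := by
  classical
  have h : Partrec (fun x ↦ Nat.rfind fun n => Part.some (decide (p x n))) :=
    Partrec.rfind hp.decide.partrec
  refine h.dom_re.of_eq fun a => ?_
  refine Nat.rfind_dom.trans ?_
  constructor
  · rintro ⟨n, h1, -⟩
    exact ⟨n, by simpa using h1⟩
  · rintro ⟨n, h1⟩
    exact ⟨n, by simpa using h1, fun _ => trivial⟩

theorem qsum {F : α → ℕ → ℚ} {N : α → ℕ} (hF : Computable fun x : α × ℕ => F x.1 x.2)
    (hN : Computable N) : Computable fun a => ∑ k ∈ Finset.range (N a), F a k := by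
  have h : Computable₂ (fun (a : α) (x : ℕ × ℚ) => x.2 + F a x.1) :=
    (qadd (Computable.snd.comp Computable.snd)
      (hF.comp (Computable.fst.pair (Computable.fst.comp Computable.snd)))).to₂
  refine (Computable.nat_rec hN (Computable.const 0) h).of_eq fun a => ?_
  induction N a with
  | zero => simp
  | succ n ih => simp only [ih, Finset.sum_range_succ]

end RatComp2


section General


theorem computable_hdist (D : ℕ → ℕ → ℚ × ℚ) (hD : Computable fun x : ℕ × ℕ => D x.1 x.2) :
    Computable fun x : (((ℚ × ℚ) × ℚ) × ℕ) × ℕ =>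
      max |(D x.1.2 x.2).1 - x.1.1.1.1| |(D x.1.2 x.2).2 - x.1.1.1.2| := by
  have hp : Computable fun x : (((ℚ × ℚ) × ℚ) × ℕ) × ℕ => (x.1.2, x.2) :=
    (Computable.snd.comp Computable.fst).pair Computable.snd
  have hDx : Computable fun x : (((ℚ × ℚ) × ℚ) × ℕ) × ℕ => D x.1.2 x.2 :=
    Computable.comp (f := fun x : ℕ × ℕ => D x.1 x.2)
      (g := fun x : (((ℚ × ℚ) × ℚ) × ℕ) × ℕ => (x.1.2, x.2)) hD hp
  have hc : Computable fun x : (((ℚ × ℚ) × ℚ) × ℕ) × ℕ => x.1.1.1 :=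
    Computable.fst.comp (Computable.fst.comp Computable.fst)
  have hc1 : Computable fun x : (((ℚ × ℚ) × ℚ) × ℕ) × ℕ => x.1.1.1.1 := Computable.fst.comp hc
  have hc2 : Computable fun x : (((ℚ × ℚ) × ℚ) × ℕ) × ℕ => x.1.1.1.2 := Computable.snd.comp hc
  have hd1 : Computable fun x : (((ℚ × ℚ) × ℚ) × ℕ) × ℕ => (D x.1.2 x.2).1 := Computable.fst.comp hDx
  have hd2 : Computable fun x : (((ℚ × ℚ) × ℚ) × ℕ) × ℕ => (D x.1.2 x.2).2 := Computable.snd.comp hDx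
  exact qmax (qabs (qsub hd1 hc1)) (qabs (qsub hd2 hc2))

theorem re_forall_lt {γ : Type*} [Primcodable γ] (A B : (γ × ℕ) × ℕ → ℚ) (N : ℕ → ℕ)
    (hA : Computable A) (hB : Computable B) (hN : Computable N) :
    REPred fun c : γ => ∃ t, ∀ k < N t, A ((c, t), k) < B ((c, t), k) := by
  have hNx : Computable fun x : γ × ℕ => N x.2 := hN.comp Computable.snd
  have h1 : ComputablePred fun x : (γ × ℕ) × ℕ => A x < B x := qlt hA hB
  have h2 : ComputablePred fun x : γ × ℕ => ∀ k < N x.2, A (x, k) < B (x, k) :=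
    cpforall (p := fun (x : γ × ℕ) (k : ℕ) => A (x, k) < B (x, k)) h1 hNx
  exact re_exists (p := fun (c : γ) (t : ℕ) => ∀ k < N t, A ((c, t), k) < B ((c, t), k)) h2

theorem re_exists_lt {γ : Type*} [Primcodable γ] (A B : (γ × ℕ) × ℕ → ℚ) (N : ℕ → ℕ)
    (hA : Computable A) (hB : Computable B) (hN : Computable N) :
    REPred fun c : γ => ∃ t, ∃ k < N t, A ((c, t), k) < B ((c, t), k) := by
  have hNx : Computable fun x : γ × ℕ => N x.2 := hN.comp Computable.snd
  have h1 : ComputablePred fun x : (γ × ℕ) × ℕ => A x < B x := qlt hA hB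
  have h2 : ComputablePred fun x : γ × ℕ => ∃ k < N x.2, A (x, k) < B (x, k) :=
    cpexists (p := fun (x : γ × ℕ) (k : ℕ) => A (x, k) < B (x, k)) h1 hNx
  exact re_exists (p := fun (c : γ) (t : ℕ) => ∃ k < N t, A ((c, t), k) < B ((c, t), k)) h2

/-- the two test functions -/
theorem re_test1 (D : ℕ → ℕ → ℚ × ℚ) (hD : Computable fun x : ℕ × ℕ => D x.1 x.2)
    (N : ℕ → ℕ) (hN : Computable N) :
    REPred fun c : (ℚ × ℚ) × ℚ => ∃ t, ∀ k < N t, c.2 + 4 * (1 / 2 ^ t) <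
      max |(D t k).1 - c.1.1| |(D t k).2 - c.1.2| := by
  have hdist := computable_hdist D hD
  have hr : Computable fun x : (((ℚ × ℚ) × ℚ) × ℕ) × ℕ => x.1.1.2 :=
    Computable.snd.comp (Computable.fst.comp Computable.fst)
  have he : Computable fun x : (((ℚ × ℚ) × ℚ) × ℕ) × ℕ => (4 : ℚ) * (1 / 2 ^ x.1.2) :=
    qmul (Computable.const 4) (qipow2 (Computable.snd.comp Computable.fst))
  have hA := qadd hr he
  have := re_forall_lt _ _ N hA hdist hN
  exact this

theorem re_test2 (D : ℕ → ℕ → ℚ × ℚ) (hD : Computable fun x : ℕ × ℕ => D x.1 x.2)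
    (N : ℕ → ℕ) (hN : Computable N) :
    REPred fun c : (ℚ × ℚ) × ℚ => ∃ t, ∃ k < N t, 
      max |(D t k).1 - c.1.1| |(D t k).2 - c.1.2| + 4 * (1 / 2 ^ t) < c.2 := by
  have hdist := computable_hdist D hD
  have hr : Computable fun x : (((ℚ × ℚ) × ℚ) × ℕ) × ℕ => x.1.1.2 :=
    Computable.snd.comp (Computable.fst.comp Computable.fst)
  have he : Computable fun x : (((ℚ × ℚ) × ℚ) × ℕ) × ℕ => (4 : ℚ) * (1 / 2 ^ x.1.2) :=
    qmul (Computable.const 4) (qipow2 (Computable.snd.comp Computable.fst))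
  have hA := qadd hdist he
  have := re_exists_lt _ _ N hA hr hN
  exact this

theorem isComputableClosed_of_approx (K : Set (ℝ × ℝ)) (hK : IsClosed K)
    (D : ℕ → ℕ → ℚ × ℚ) (N : ℕ → ℕ) (hD : Computable fun x : ℕ × ℕ => D x.1 x.2)
    (hN : Computable N)
    (h1 : ∀ t, ∀ k < N t, ∃ z ∈ K, dist z (((D t k).1 : ℝ), ((D t k).2 : ℝ)) ≤ 4 / 2 ^ t)
    (h2 : ∀ t, ∀ z ∈ K, ∃ k < N t, dist z (((D t k).1 : ℝ), ((D t k).2 : ℝ)) ≤ 4 / 2 ^ t) :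
    IsComputableClosed K := by
  -- the computable rational distance
  have hcast : ∀ (c : (ℚ × ℚ) × ℚ) (d : ℚ × ℚ),
      dist ((d.1 : ℝ), (d.2 : ℝ)) (((c.1.1 : ℝ), (c.1.2 : ℝ)) : ℝ × ℝ) =
        ((max |d.1 - c.1.1| |d.2 - c.1.2| : ℚ) : ℝ) := by
    intro c d
    rw [Prod.dist_eq, Real.dist_eq, Real.dist_eq]
    push_cast
    rfl
  have hsmall : ∀ δ : ℝ, 0 < δ → ∃ t : ℕ, 8 / 2 ^ t < δ := by
    intro δ hδ
    obtain ⟨t, ht⟩ := exists_pow_lt_of_lt_one (show 0 < δ / 8 by positivity) (show (1/2 : ℝ) < 1 by norm_num)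
    refine ⟨t, ?_⟩
    have : (8:ℝ) / 2 ^ t = 8 * (1/2)^t := by rw [one_div, inv_pow]; ring
    rw [this]; linarith
  have hecast : ∀ t : ℕ, (((4 : ℚ) * (1 / 2 ^ t) : ℚ) : ℝ) = 4 / 2 ^ t := by
    intro t; push_cast; ring
  constructor
  · refine ⟨fun c => ∃ t, ∀ k < N t, c.2 + 4 * (1 / 2 ^ t) <
      max |(D t k).1 - c.1.1| |(D t k).2 - c.1.2|, ?_, ?_⟩
    · exact re_test1 D hD N hN
    · ext z
      simp only [mem_sdiff, mem_univ, true_and, mem_iUnion, mem_ofPred_eq, not_exists]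
      constructor
      · rintro hz c ⟨t, ht⟩ hzc
        obtain ⟨k, hk, hd⟩ := h2 t z hz
        have h3 := ht k hk
        rw [← Rat.cast_lt (K := ℝ), ← hcast, Rat.cast_add, hecast] at h3
        have h4 : dist z (((c.1.1 : ℝ), (c.1.2 : ℝ)) : ℝ × ℝ) < (c.2 : ℝ) := hzc
        have h5 := dist_triangle_left (((D t k).1 : ℝ), ((D t k).2 : ℝ)) (((c.1.1 : ℝ), (c.1.2 : ℝ)) : ℝ × ℝ) z
        linarith
      · intro h
        by_contra hz
        obtain ⟨δ, hδ, hball⟩ := Metric.isOpen_iff.1 hK.isOpen_compl z hz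
        obtain ⟨t, ht⟩ := hsmall (δ / 4) (by positivity)
        have ht0 : (0:ℝ) < 8 / 2 ^ t := by positivity
        obtain ⟨r, hr1, hr2⟩ := exists_rat_btwn (show (δ/8 : ℝ) < δ / 4 by linarith)
        obtain ⟨a, ha1, ha2⟩ := exists_rat_btwn (show z.1 - δ/8 < z.1 by linarith)
        obtain ⟨b, hb1, hb2⟩ := exists_rat_btwn (show z.2 - δ/8 < z.2 by linarith)
        have hzd : dist z ((a : ℝ), (b : ℝ)) < r := by
          rw [Prod.dist_eq, Real.dist_eq, Real.dist_eq]
          apply max_lt <;> rw [abs_lt] <;> constructor <;> simp only [] <;> linarith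
        refine h ((a, b), r) ⟨t, fun k hk => ?_⟩ hzd
        rw [← Rat.cast_lt (K := ℝ), ← hcast, Rat.cast_add, hecast]
        obtain ⟨w, hw, hwd⟩ := h1 t k hk
        have hwz : δ ≤ dist w z := by
          by_contra hlt
          exact hball (not_le.1 hlt) hw
        have h5 := dist_triangle4 w (((D t k).1 : ℝ), ((D t k).2 : ℝ)) ((a : ℝ), (b : ℝ)) z
        rw [dist_comm ((a : ℝ), (b : ℝ)) z] at h5
        have h6 : (4:ℝ) / 2 ^ t = (8 / 2 ^ t) / 2 := by ring
        simp only [] at *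
        linarith
  · refine (re_test2 D hD N hN).of_eq fun c => ?_
    constructor
    · rintro ⟨t, k, hk, hlt⟩
      rw [← Rat.cast_lt (K := ℝ), Rat.cast_add, hecast, ← hcast] at hlt
      obtain ⟨w, hw, hwd⟩ := h1 t k hk
      refine ⟨w, hw, ?_⟩
      change dist w (((c.1.1 : ℝ), (c.1.2 : ℝ)) : ℝ × ℝ) < (c.2 : ℝ)
      have := dist_triangle w (((D t k).1 : ℝ), ((D t k).2 : ℝ)) (((c.1.1 : ℝ), (c.1.2 : ℝ)) : ℝ × ℝ)
      linarith
    · rintro ⟨z, hz, hzc⟩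
      have h4 : dist z (((c.1.1 : ℝ), (c.1.2 : ℝ)) : ℝ × ℝ) < (c.2 : ℝ) := hzc
      obtain ⟨t, ht⟩ := hsmall _ (sub_pos.2 h4)
      obtain ⟨k, hk, hd⟩ := h2 t z hz
      refine ⟨t, k, hk, ?_⟩
      rw [← Rat.cast_lt (K := ℝ), Rat.cast_add, hecast, ← hcast]
      have := dist_triangle_left (((D t k).1 : ℝ), ((D t k).2 : ℝ)) (((c.1.1 : ℝ), (c.1.2 : ℝ)) : ℝ × ℝ) z
      have h6 : (4:ℝ) / 2 ^ t = (8 / 2 ^ t) / 2 := by ring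
      linarith

end General


section Event

open Nat.Partrec (Code)

/-- decoding of ball codes -/
def decC (e : ℕ) : Option ((ℚ × ℚ) × ℚ) :=
  @Encodable.decode ((ℚ × ℚ) × ℚ) Primcodable.toEncodable e
def encC (c : (ℚ × ℚ) × ℚ) : ℕ :=
  @Encodable.encode ((ℚ × ℚ) × ℚ) Primcodable.toEncodable c

theorem decC_encC (c : (ℚ × ℚ) × ℚ) : decC (encC c) = some c :=
  @Encodable.encodek _ Primcodable.toEncodable c

theorem computable_decC : Computable decC := Computable.decode

theorem exists_index (W : (ℚ × ℚ) × ℚ → Prop) (hW : REPred W) :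
    ∃ n : ℕ, ∀ e, (∃ c, decC e = some c ∧ W c) ↔ ((Denumerable.ofNat Code n).eval e).Dom := by
  obtain ⟨c, hc⟩ := Nat.Partrec.Code.exists_code.1 hW
  refine ⟨Encodable.encode c, fun e => ?_⟩
  rw [Denumerable.ofNat_encode, hc]
  change _ ↔ (Part.bind (decC e : Part ((ℚ × ℚ) × ℚ)) _).Dom
  cases h : decC e with
  | none => simp
  | some a =>
    simp [Part.assert]

attribute [irreducible] decC encC

def dC (e : ℕ) : (ℚ × ℚ) × ℚ := (decC e).getD ((0, 0), 0)

theorem computable_dC : Computable dC :=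
  Computable.option_getD computable_decC (Computable.const _)

def sN (s : ℕ) : ℕ := s.unpair.1
def sI (s : ℕ) : ℕ := s.unpair.2.unpair.1
def sE (s : ℕ) : ℕ := s.unpair.2.unpair.2.unpair.1
def sK (s : ℕ) : ℕ := s.unpair.2.unpair.2.unpair.2

theorem computable_sN : Computable sN := Computable.fst.comp Computable.unpair
theorem computable_sI : Computable sI :=
  Computable.fst.comp (Computable.unpair.comp (Computable.snd.comp Computable.unpair))
theorem computable_sE : Computable sE :=
  Computable.fst.comp (Computable.unpair.comp (Computable.snd.comp (Computable.unpair.comp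
    (Computable.snd.comp Computable.unpair))))
theorem computable_sK : Computable sK :=
  Computable.snd.comp (Computable.unpair.comp (Computable.snd.comp (Computable.unpair.comp
    (Computable.snd.comp Computable.unpair))))

theorem sI_le (s : ℕ) : sI s ≤ s := (Nat.unpair_left_le _).trans (Nat.unpair_right_le _)

def xq (i : ℕ) : ℚ := 1 / 2 + 1 / 2 ^ (i + 2)
def yq (n : ℕ) : ℚ := 1 / 2 ^ (n + 2)
def wq (s : ℕ) : ℚ := 1 / 2 ^ (s + 3)

/-- the halting test -/
def haltT (s : ℕ) : Prop :=
  ((Denumerable.ofNat Code (sN s)).evaln (sK s) (sE s)).isSome = true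

/-- the event -/
def Ev (s : ℕ) : Prop :=
  sN s ≤ sI s ∧ haltT s ∧ |xq (sI s) - (dC (sE s)).1.1| < (dC (sE s)).2 ∧
    |xq (sI s) + wq s - (dC (sE s)).1.1| < (dC (sE s)).2 ∧
    |yq (sN s) - (dC (sE s)).1.2| < (dC (sE s)).2

/-- the first event for given index -/
def Act (s : ℕ) : Prop := Ev s ∧ ∀ s' < s, ¬ (Ev s' ∧ sN s' = sN s)

theorem computable_evaln (f : ℕ → ℕ) (g : ℕ → Code) (h : ℕ → ℕ) (hf : Computable f) (hg : Computable g)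
    (hh : Computable h) : Computable fun s => (g s).evaln (f s) (h s) :=
  Computable.comp (f := fun a : (ℕ × Code) × ℕ => a.1.2.evaln a.1.1 a.2)
    (g := fun s => ((f s, g s), h s)) Nat.Partrec.Code.primrec_evaln.to_comp ((hf.pair hg).pair hh)

theorem computablePred_haltT : ComputablePred haltT := by
  have h1 : Computable fun s => Denumerable.ofNat Code (sN s) :=
    (Computable.ofNat Code).comp computable_sN
  have h2 := computable_evaln sK _ sE computable_sK h1 computable_sE
  have h3 : Computable fun s => (((Denumerable.ofNat Code (sN s)).evaln (sK s) (sE s)).isSome) :=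
    Primrec.option_isSome.to_comp.comp h2
  classical
  refine Computable.computablePred (h3.of_eq fun s => ?_)
  unfold haltT
  simp

theorem computable_xq : Computable xq :=
  qadd (Computable.const _) (qipow2 (cadd Computable.id (Computable.const 2)))
theorem computable_yq : Computable yq := qipow2 (cadd Computable.id (Computable.const 2))
theorem computable_wq : Computable wq := qipow2 (cadd Computable.id (Computable.const 3))

theorem computablePred_Ev : ComputablePred Ev := by
  have hc : Computable fun s => dC (sE s) := computable_dC.comp computable_sE
  have hr : Computable fun s => (dC (sE s)).2 := Computable.snd.comp hc
  have hc0 : Computable fun s => (dC (sE s)).1 := Computable.fst.comp hc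
  have hc1 : Computable fun s => (dC (sE s)).1.1 := Computable.fst.comp hc0
  have hc2 : Computable fun s => (dC (sE s)).1.2 := Computable.snd.comp hc0
  have hx : Computable fun s => xq (sI s) := computable_xq.comp computable_sI
  have hy : Computable fun s => yq (sN s) := computable_yq.comp computable_sN
  have hle : ComputablePred fun s => sN s ≤ sI s := by
    refine (cpnot (qlt (qcast computable_sI) (qcast computable_sN))).of_eq fun s => ?_
    simp
  exact cpand hle (cpand computablePred_haltT (cpand (qlt (qabs (qsub hx hc1)) hr)
    (cpand (qlt (qabs (qsub (qadd hx computable_wq) hc1)) hr) (qlt (qabs (qsub hy hc2)) hr))))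

theorem computablePred_Act : ComputablePred Act := by
  refine cpand computablePred_Ev ?_
  refine cpforall (p := fun s s' => ¬ (Ev s' ∧ sN s' = sN s)) ?_ Computable.id
  refine cpnot (cpand (ComputablePred.comp' computablePred_Ev Computable.snd) ?_)
  have h1 : ComputablePred fun x : ℕ × ℕ => x.1 = x.2 := Primrec.eq.computablePred
  exact ComputablePred.comp' (p := fun x : ℕ × ℕ => x.1 = x.2)
    (f := fun x : ℕ × ℕ => (sN x.2, sN x.1)) h1
    ((computable_sN.comp Computable.snd).pair (computable_sN.comp Computable.fst))

/-- rational tent -/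
def tentq (s : ℕ) (x : ℚ) : ℚ :=
  max 0 (min ((2 ^ (s + 4) : ℕ) * (x - xq (sI s))) (2 - (2 ^ (s + 4) : ℕ) * (x - xq (sI s))))

open Classical in
noncomputable def termq (s : ℕ) (x : ℚ) : ℚ := if Act s then 1 / 2 ^ (sN s + 1) * tentq s x else 0

theorem computable_termq : Computable fun p : ℕ × ℚ => termq p.1 p.2 := by
  have hs : Computable fun p : ℕ × ℚ => p.1 := Computable.fst
  have hx : Computable fun p : ℕ × ℚ => p.2 := Computable.snd
  have hA : ComputablePred fun p : ℕ × ℚ => Act p.1 := ComputablePred.comp' computablePred_Act hs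
  have hxi : Computable fun p : ℕ × ℚ => xq (sI p.1) :=
    computable_xq.comp (computable_sI.comp hs)
  have hv : Computable fun p : ℕ × ℚ => ((2 ^ (p.1 + 4) : ℕ) : ℚ) * (p.2 - xq (sI p.1)) :=
    qmul (qcast (cpow2 (cadd hs (Computable.const 4)))) (qsub hx hxi)
  have ht : Computable fun p : ℕ × ℚ => tentq p.1 p.2 :=
    qmax (Computable.const 0) (qmin hv (qsub (Computable.const 2) hv))
  have hn : Computable fun p : ℕ × ℚ => (1 : ℚ) / 2 ^ (sN p.1 + 1) :=
    qipow2 (cadd (computable_sN.comp hs) (Computable.const 1))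
  exact cite hA (qmul hn ht) (Computable.const 0)

noncomputable def ftq (t : ℕ) (x : ℚ) : ℚ := ∑ s ∈ Finset.range t, termq s x

theorem computable_ftq : Computable fun p : ℕ × ℚ => ftq p.1 p.2 := by
  refine qsum (F := fun (p : ℕ × ℚ) (s : ℕ) => termq s p.2) ?_ Computable.fst
  exact Computable.comp (f := fun p : ℕ × ℚ => termq p.1 p.2)
    (g := fun x : (ℕ × ℚ) × ℕ => (x.2, x.1.2)) computable_termq
    (Computable.snd.pair (Computable.snd.comp Computable.fst))

/-- graph sample abscissa -/
def gx (t k : ℕ) : ℚ := ((min (k / 2) (2 ^ (2 * t + 6)) : ℕ) : ℚ) * (1 / 2 ^ (2 * t + 6))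

noncomputable def Dpt (t k : ℕ) : ℚ × ℚ :=
  if k % 2 = 0 then (gx t k, ftq t (gx t k))
  else (xq (min (k / 2).unpair.1 t), ((min (k / 2).unpair.2 (2 ^ t) : ℕ) : ℚ) * (1 / 2 ^ t))

def Nn (t : ℕ) : ℕ := 2 * ((2 ^ (2 * t + 6) + t + 1) * (2 ^ (2 * t + 6) + t + 1)) + 1

theorem computable_Nn : Computable Nn := by
  have h : Computable fun t : ℕ => 2 ^ (2 * t + 6) + t + 1 :=
    cadd (cadd (cpow2 (cadd (cmul (Computable.const 2) Computable.id) (Computable.const 6)))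
      Computable.id) (Computable.const 1)
  exact cadd (cmul (Computable.const 2) (cmul h h)) (Computable.const 1)

theorem cmin {α : Type*} [Primcodable α] {f g : α → ℕ} (hf : Computable f) (hg : Computable g) :
    Computable fun a => min (f a) (g a) := Primrec.nat_min.to_comp.comp hf hg

theorem computable_gx : Computable fun p : ℕ × ℕ => gx p.1 p.2 := by
  have ht : Computable fun p : ℕ × ℕ => p.1 := Computable.fst
  have hk : Computable fun p : ℕ × ℕ => p.2 := Computable.snd
  have h2 : Computable fun p : ℕ × ℕ => p.2 / 2 :=
    Primrec.nat_div.to_comp.comp hk (Computable.const 2)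
  have he : Computable fun p : ℕ × ℕ => 2 * p.1 + 6 :=
    cadd (cmul (Computable.const 2) ht) (Computable.const 6)
  exact qmul (qcast (cmin h2 (cpow2 he))) (qipow2 he)

theorem computable_Dpt : Computable fun p : ℕ × ℕ => Dpt p.1 p.2 := by
  have ht : Computable fun p : ℕ × ℕ => p.1 := Computable.fst
  have hk : Computable fun p : ℕ × ℕ => p.2 := Computable.snd
  have h2 : Computable fun p : ℕ × ℕ => p.2 / 2 :=
    Primrec.nat_div.to_comp.comp hk (Computable.const 2)
  have hu : Computable fun p : ℕ × ℕ => (p.2 / 2).unpair := Computable.unpair.comp h2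
  have hu1 : Computable fun p : ℕ × ℕ => (p.2 / 2).unpair.1 := Computable.fst.comp hu
  have hu2 : Computable fun p : ℕ × ℕ => (p.2 / 2).unpair.2 := Computable.snd.comp hu
  have hf : Computable fun p : ℕ × ℕ => ftq p.1 (gx p.1 p.2) :=
    Computable.comp (f := fun p : ℕ × ℚ => ftq p.1 p.2)
      (g := fun p : ℕ × ℕ => (p.1, gx p.1 p.2)) computable_ftq (ht.pair computable_gx)
  have hodd : ComputablePred fun p : ℕ × ℕ => p.2 % 2 = 0 :=
    (Primrec.eq.comp (Primrec.nat_mod.comp Primrec.snd (Primrec.const 2))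
      (Primrec.const 0)).computablePred
  have hx : Computable fun p : ℕ × ℕ => xq (min (p.2 / 2).unpair.1 p.1) :=
    computable_xq.comp (cmin hu1 ht)
  have hy : Computable fun p : ℕ × ℕ =>
      ((min (p.2 / 2).unpair.2 (2 ^ p.1) : ℕ) : ℚ) * (1 / 2 ^ p.1) :=
    qmul (qcast (cmin hu2 (cpow2 ht))) (qipow2 ht)
  classical
  refine (cite hodd (computable_gx.pair hf) (hx.pair hy)).of_eq fun p => ?_
  unfold Dpt
  congr

end Event


section Analysis

theorem Act.inj {s t : ℕ} (hs : Act s) (ht : Act t) (h : sN s = sN t) : s = t := by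
  rcases lt_trichotomy s t with h1 | h1 | h1
  · exact absurd ⟨hs.1, h⟩ (ht.2 s h1)
  · exact h1
  · exact absurd ⟨ht.1, h.symm⟩ (hs.2 t h1)

noncomputable def xr (i : ℕ) : ℝ := 1 / 2 + 1 / 2 ^ (i + 2)

theorem xr_cast (i : ℕ) : ((xq i : ℚ) : ℝ) = xr i := by unfold xq xr; push_cast; rfl

noncomputable def tent (s : ℕ) (x : ℝ) : ℝ :=
  max 0 (min (2 ^ (s + 4) * (x - xr (sI s))) (2 - 2 ^ (s + 4) * (x - xr (sI s))))

open Classical in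
noncomputable def cf (s : ℕ) : ℝ := if Act s then 1 / 2 ^ (sN s + 1) else 0

noncomputable def ft (t : ℕ) (x : ℝ) : ℝ := ∑ s ∈ Finset.range t, cf s * tent s x

noncomputable def ff (x : ℝ) : ℝ := ∑' s, cf s * tent s x

theorem tent_cast (s : ℕ) (x : ℚ) : ((tentq s x : ℚ) : ℝ) = tent s x := by
  unfold tentq tent; push_cast [xr_cast]; rfl

theorem ft_cast (t : ℕ) (x : ℚ) : ((ftq t x : ℚ) : ℝ) = ft t x := by
  unfold ftq ft
  push_cast
  refine Finset.sum_congr rfl fun s _ => ?_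
  unfold termq cf
  split_ifs
  · push_cast [tent_cast]; rfl
  · simp

theorem tent_nonneg (s : ℕ) (x : ℝ) : 0 ≤ tent s x := le_max_left _ _

theorem tent_le_one (s : ℕ) (x : ℝ) : tent s x ≤ 1 := by
  unfold tent
  apply max_le zero_le_one
  rcases le_total (2 ^ (s + 4) * (x - xr (sI s))) 1 with h | h
  · exact (min_le_left _ _).trans h
  · exact (min_le_right _ _).trans (by linarith)

theorem cf_nonneg (s : ℕ) : 0 ≤ cf s := by unfold cf; split_ifs <;> positivity

theorem cf_le_half (s : ℕ) : cf s ≤ 1 / 2 := by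
  unfold cf; split_ifs
  · rw [pow_succ]
    have : (1:ℝ) ≤ 2 ^ sN s := one_le_pow₀ (by norm_num)
    rw [div_le_div_iff₀ (by positivity) (by norm_num)]; linarith
  · norm_num

theorem sum_cf_le (S : Finset ℕ) : ∑ s ∈ S, cf s ≤ 1 := by
  classical
  have h1 : ∑ s ∈ S, cf s = ∑ s ∈ S.filter Act, (1:ℝ) / 2 ^ (sN s + 1) := by
    rw [Finset.sum_filter]; rfl
  have h2 : ∑ s ∈ S.filter Act, (1:ℝ) / 2 ^ (sN s + 1)
      = ∑ n ∈ (S.filter Act).image sN, (1:ℝ) / 2 ^ (n + 1) := by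
    rw [Finset.sum_image]
    intro a ha b hb hab
    simp only [Finset.coe_filter, mem_ofPred_eq] at ha hb
    exact Act.inj ha.2 hb.2 hab
  have h3 : HasSum (fun n : ℕ => (1:ℝ) / 2 ^ (n + 1)) 1 := by
    have := hasSum_geometric_two' (1:ℝ)
    convert! this using 2 with n
    rw [pow_succ, div_div, mul_comm]
  rw [h1, h2]
  exact sum_le_hasSum _ (fun n _ => by positivity) h3

theorem cf_summable : Summable cf := summable_of_sum_le cf_nonneg sum_cf_le

theorem term_nonneg (s : ℕ) (x : ℝ) : 0 ≤ cf s * tent s x :=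
  mul_nonneg (cf_nonneg s) (tent_nonneg s x)

theorem term_le (s : ℕ) (x : ℝ) : cf s * tent s x ≤ cf s :=
  mul_le_of_le_one_right (cf_nonneg s) (tent_le_one s x)

theorem term_summable (x : ℝ) : Summable fun s => cf s * tent s x :=
  Summable.of_nonneg_of_le (fun s => term_nonneg s x) (fun s => term_le s x) cf_summable

theorem ff_continuous : Continuous ff := by
  refine continuous_tsum (u := cf) (fun s => ?_) cf_summable (fun s x => ?_)
  · unfold tent; fun_prop
  · rw [Real.norm_of_nonneg (term_nonneg s x)]; exact term_le s x

theorem ff_nonneg (x : ℝ) : 0 ≤ ff x := tsum_nonneg fun s => term_nonneg s x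

theorem ff_le_one (x : ℝ) : ff x ≤ 1 :=
  Summable.tsum_le_of_sum_le (term_summable x) fun S =>
    (Finset.sum_le_sum fun s _ => term_le s x).trans (sum_cf_le S)

theorem ft_nonneg (t : ℕ) (x : ℝ) : 0 ≤ ft t x := Finset.sum_nonneg fun s _ => term_nonneg s x
theorem ft_le_one (t : ℕ) (x : ℝ) : ft t x ≤ 1 :=
  (Finset.sum_le_sum fun s _ => term_le s x).trans (sum_cf_le _)

theorem term_ne_zero {s : ℕ} {x : ℝ} (h : cf s * tent s x ≠ 0) :
    Act s ∧ xr (sI s) < x ∧ x < xr (sI s) + 1 / 2 ^ (s + 3) := by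
  have h1 : Act s := by
    by_contra hA
    apply h; unfold cf; rw [if_neg hA, zero_mul]
  have h2 : 0 < tent s x := (tent_nonneg s x).lt_of_ne' (right_ne_zero_of_mul h)
  unfold tent at h2
  rw [lt_max_iff, lt_min_iff] at h2
  rcases h2 with h2 | ⟨h2, h3⟩
  · exact absurd h2 (lt_irrefl _)
  have hp : (0:ℝ) < 2 ^ (s + 3) := by positivity
  have h4 : (2:ℝ) ^ (s + 4) = 2 * 2 ^ (s + 3) := by rw [pow_succ]; ring
  refine ⟨h1, ?_, ?_⟩
  · have := (mul_pos_iff_of_pos_left (show (0:ℝ) < 2 ^ (s + 4) by positivity)).1 h2; linarith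
  · rw [h4] at h3
    have : (x - xr (sI s)) < 1 / 2 ^ (s + 3) := by
      rw [lt_div_iff₀ hp]; nlinarith
    linarith

theorem ff_eq_ft_or (t : ℕ) (x : ℝ) : ff x = ft t x ∨
    ∃ i, xr i < x ∧ x < xr i + 1 / 2 ^ (t + 3) := by
  by_cases h : ∃ s, t ≤ s ∧ cf s * tent s x ≠ 0
  · obtain ⟨s, hs, hne⟩ := h
    obtain ⟨_, h1, h2⟩ := term_ne_zero hne
    refine Or.inr ⟨sI s, h1, h2.trans_le ?_⟩
    have : (1:ℝ) / 2 ^ (s + 3) ≤ 1 / 2 ^ (t + 3) := by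
      apply one_div_le_one_div_of_le (by positivity)
      exact pow_le_pow_right₀ (by norm_num) (by omega)
    linarith
  · push Not at h
    left
    refine tsum_eq_sum fun s hs => h s ?_
    simpa using hs

theorem half_pow_le {i j : ℕ} (h : i ≤ j) : (1:ℝ) / 2 ^ j ≤ 1 / 2 ^ i :=
  one_div_le_one_div_of_le (by positivity) (pow_le_pow_right₀ (by norm_num) h)

theorem half_pow_succ (i : ℕ) : (1:ℝ) / 2 ^ (i + 1) = (1 / 2 ^ i) / 2 := by
  rw [pow_succ]; field_simp

/-- `f` vanishes off the supports. -/
theorem ff_eq_zero {x : ℝ} (h : ∀ i, ¬ (xr i < x ∧ x < xr i + 1 / 2 ^ (i + 3))) : ff x = 0 := by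
  unfold ff
  have : ∀ s, cf s * tent s x = 0 := by
    intro s
    by_contra hne
    obtain ⟨_, h1, h2⟩ := term_ne_zero hne
    apply h (sI s) ⟨h1, h2.trans_le _⟩
    have := half_pow_le (show sI s + 3 ≤ s + 3 by have := sI_le s; omega)
    linarith
  simp [this]

theorem ff_xr (j : ℕ) : ff (xr j) = 0 := by
  apply ff_eq_zero
  rintro i ⟨h1, h2⟩
  unfold xr at h1 h2
  rcases lt_or_ge j i with h | h
  · have a1 := half_pow_le (show j + 2 + 1 ≤ i + 2 by omega)
    have a2 := half_pow_succ (j + 2)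
    have a3 := half_pow_succ (i + 2)
    have a4 : (0:ℝ) < 1 / 2 ^ (i + 2) := by positivity
    have e : i + 2 + 1 = i + 3 := rfl
    rw [e] at a3
    linarith
  · have a1 := half_pow_le (show i + 2 ≤ j + 2 by omega)
    linarith

theorem ff_le_half {x : ℝ} (hx : x ≤ 1 / 2) : ff x = 0 := by
  apply ff_eq_zero
  rintro i ⟨h1, h2⟩
  unfold xr at h1
  have : (0:ℝ) < 1 / 2 ^ (i + 2) := by positivity
  linarith

noncomputable def mid (i : ℕ) : ℝ := xr (i + 1) + 1 / 2 ^ (i + 4)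

theorem ff_mid (j : ℕ) : ff (mid j) = 0 := by
  apply ff_eq_zero
  rintro i ⟨h1, h2⟩
  unfold mid xr at h1 h2
  have b2 := half_pow_succ (j + 1 + 2)
  have e2 : j + 1 + 2 + 1 = j + 4 := rfl
  rw [e2] at b2
  have b3 := half_pow_succ (j + 2)
  have e3 : j + 2 + 1 = j + 1 + 2 := rfl
  rw [e3] at b3
  have b0 : (0:ℝ) < 1 / 2 ^ (j + 2) := by positivity
  rcases le_or_gt i j with h | h
  · have a1 := half_pow_le (show i + 2 ≤ j + 2 by omega)
    linarith
  · have a1 := half_pow_le (show j + 1 + 2 ≤ i + 2 by omega)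
    have a2 := half_pow_le (show j + 4 ≤ i + 3 by omega)
    linarith

theorem tent_lip (s : ℕ) (x y : ℝ) : |tent s x - tent s y| ≤ 2 ^ (s + 4) * |x - y| := by
  unfold tent
  have hp : (0:ℝ) < 2 ^ (s + 4) := by positivity
  have e : 2 ^ (s + 4) * |x - y| =
      |2 ^ (s + 4) * (x - xr (sI s)) - 2 ^ (s + 4) * (y - xr (sI s))| := by
    rw [← mul_sub, abs_mul, abs_of_pos hp]; congr 2; ring
  rw [e]
  generalize 2 ^ (s + 4) * (x - xr (sI s)) = a
  generalize 2 ^ (s + 4) * (y - xr (sI s)) = b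
  refine (abs_max_sub_max_le_max _ _ _ _).trans ?_
  rw [sub_self, abs_zero]
  apply max_le (abs_nonneg _)
  refine (abs_min_sub_min_le_max _ _ _ _).trans ?_
  apply max_le le_rfl
  rw [abs_sub_comm a b]
  apply le_of_eq; congr 1; ring

theorem ft_lip (t : ℕ) (x y : ℝ) : |ft t x - ft t y| ≤ 2 ^ (t + 3) * |x - y| := by
  induction t with
  | zero => simp [ft]; 
  | succ t ih =>
    have e : ∀ z, ft (t + 1) z = ft t z + cf t * tent t z := fun z => by
      unfold ft; rw [Finset.sum_range_succ]
    rw [e, e]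
    have h1 : ft t x + cf t * tent t x - (ft t y + cf t * tent t y) =
      (ft t x - ft t y) + cf t * (tent t x - tent t y) := by ring
    rw [h1]
    refine (abs_add_le _ _).trans ?_
    rw [abs_mul, abs_of_nonneg (cf_nonneg t)]
    have h2 : cf t * |tent t x - tent t y| ≤ 1 / 2 * (2 ^ (t + 4) * |x - y|) :=
      mul_le_mul (cf_le_half t) (tent_lip t x y) (abs_nonneg _) (by norm_num)
    have h3 : (2:ℝ) ^ (t + 1 + 3) = 2 * 2 ^ (t + 3) := by rw [show t + 1 + 3 = t + 3 + 1 by ring, pow_succ]; ring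
    have h4 : (2:ℝ) ^ (t + 4) = 2 * 2 ^ (t + 3) := by rw [pow_succ]; ring
    rw [h4] at h2
    rw [h3]
    linarith

theorem xr_lt {i j : ℕ} (h : i < j) : xr j < xr i := by
  unfold xr
  have a1 := half_pow_le (show i + 2 + 1 ≤ j + 2 by omega)
  have a2 := half_pow_succ (i + 2)
  have : (0:ℝ) < 1 / 2 ^ (i + 2) := by positivity
  linarith

theorem xr_mem (i : ℕ) : 1 / 2 < xr i ∧ xr i ≤ 3 / 4 := by
  unfold xr
  have a1 := half_pow_le (show 2 ≤ i + 2 by omega)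
  have : (0:ℝ) < 1 / 2 ^ (i + 2) := by positivity
  constructor
  · linarith
  · norm_num at a1 ⊢; linarith

theorem xr_tendsto : Filter.Tendsto xr Filter.atTop (nhds (1/2)) := by
  have h : Filter.Tendsto (fun i : ℕ => (1:ℝ) / 2 ^ (i + 2)) Filter.atTop (nhds 0) := by
    have h0 := tendsto_pow_atTop_nhds_zero_of_lt_one (show (0:ℝ) ≤ 1/2 by norm_num) (by norm_num)
    have h1 := (Filter.tendsto_add_atTop_iff_nat 2).2 h0
    refine h1.congr fun i => by rw [one_div, inv_pow, one_div]
  have := h.const_add (1/2 : ℝ)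
  rw [add_zero] at this
  exact this

def CC : Set ℝ := insert (1/2) (Set.range xr)

theorem CC_compact : IsCompact CC := xr_tendsto.isCompact_insert_range

theorem CC_sub {x : ℝ} (h : x ∈ CC) : 1 / 2 ≤ x ∧ x ≤ 3 / 4 := by
  rcases h with rfl | ⟨i, rfl⟩
  · norm_num
  · exact ⟨(xr_mem i).1.le, (xr_mem i).2⟩

theorem ff_CC {x : ℝ} (h : x ∈ CC) : ff x = 0 := by
  rcases h with rfl | ⟨i, rfl⟩
  · exact ff_le_half le_rfl
  · exact ff_xr i

/-- The set. -/
def KK : Set (ℝ × ℝ) := {z | z.1 ∈ Icc (0:ℝ) 1 ∧ (z.2 = ff z.1 ∨ (z.1 ∈ CC ∧ z.2 ∈ Icc (0:ℝ) 1))}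

theorem KK_eq : KK = (fun x => (x, ff x)) '' Icc (0:ℝ) 1 ∪ CC ×ˢ Icc (0:ℝ) 1 := by
  ext ⟨x, y⟩
  simp only [KK, mem_ofPred_eq, mem_union, mem_image, Prod.mk.injEq, mem_prod]
  constructor
  · rintro ⟨hx, h | h⟩
    · exact Or.inl ⟨x, hx, rfl, h.symm⟩
    · exact Or.inr h
  · rintro (⟨a, ha, rfl, rfl⟩ | h)
    · exact ⟨ha, Or.inl rfl⟩
    · have := CC_sub h.1
      exact ⟨⟨by linarith, by linarith⟩, Or.inr h⟩

theorem KK_compact : IsCompact KK := by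
  rw [KK_eq]
  exact (isCompact_Icc.image (by have := ff_continuous; fun_prop)).union (CC_compact.prod isCompact_Icc)

theorem KK_graph {x : ℝ} (hx : x ∈ Icc (0:ℝ) 1) : (x, ff x) ∈ KK := ⟨hx, Or.inl rfl⟩
theorem KK_tooth {x y : ℝ} (hx : x ∈ CC) (hy : y ∈ Icc (0:ℝ) 1) : (x, y) ∈ KK := by
  have := CC_sub hx
  exact ⟨⟨by linarith, by linarith⟩, Or.inr ⟨hx, hy⟩⟩

theorem KK_sub : KK ⊆ Icc (0:ℝ) 1 ×ˢ Icc (0:ℝ) 1 := by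
  rintro ⟨x, y⟩ ⟨hx, h | h⟩
  · simp only [] at h; subst h; exact ⟨hx, ff_nonneg x, ff_le_one x⟩
  · exact ⟨hx, h.2⟩

theorem KK_nonempty : KK.Nonempty := ⟨_, KK_graph (x := 0) (by norm_num)⟩

end Analysis


section CompK

theorem Nn_bound1 (t a : ℕ) (ha : a ≤ 2 ^ (2 * t + 6)) : 2 * a < Nn t := by
  unfold Nn
  nlinarith [Nat.zero_le t, Nat.zero_le (2 ^ (2 * t + 6))]

theorem Nn_bound2 (t i b : ℕ) (hi : i ≤ t) (hb : b ≤ 2 ^ t) : 2 * Nat.pair i b + 1 < Nn t := by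
  have h1 : Nat.pair i b < (max i b + 1) ^ 2 := Nat.pair_lt_max_add_one_sq i b
  have h2 : (2:ℕ) ^ t ≤ 2 ^ (2 * t + 6) := Nat.pow_le_pow_right (by norm_num) (by omega)
  have h3 : max i b + 1 ≤ 2 ^ (2 * t + 6) + t + 1 := by
    have : max i b ≤ t + b := max_le (by omega) (by omega)
    omega
  have h4 := Nat.pow_le_pow_left h3 2
  unfold Nn
  rw [sq] at h4
  rw [sq (2 ^ (2 * t + 6) + t + 1)] at h4
  rw [sq] at h1
  omega

theorem dist_le_of {x y a b r : ℝ} (h1 : |x - a| ≤ r) (h2 : |y - b| ≤ r) :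
    dist (x, y) (a, b) ≤ r := by
  rw [Prod.dist_eq, Real.dist_eq, Real.dist_eq]; exact max_le h1 h2

theorem four_div (t : ℕ) : (4:ℝ) / 2 ^ t = 4 * (1 / 2 ^ t) := by ring

theorem tooth_approx (t i : ℕ) (y : ℝ) (hy : y ∈ Icc (0:ℝ) 1) :
    ∃ k < Nn t, dist (xr (min i t), y) (((Dpt t k).1 : ℝ), ((Dpt t k).2 : ℝ)) ≤ 1 / 2 ^ t := by
  have hp : (0:ℝ) < 2 ^ t := by positivity
  have hb : ⌊y * 2 ^ t⌋₊ ≤ 2 ^ t := by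
    apply Nat.floor_le_of_le
    push_cast
    nlinarith [hy.2]
  refine ⟨2 * Nat.pair (min i t) ⌊y * 2 ^ t⌋₊ + 1, Nn_bound2 t _ _ (min_le_right _ _) hb, ?_⟩
  have e1 : (2 * Nat.pair (min i t) ⌊y * 2 ^ t⌋₊ + 1) % 2 ≠ 0 := by omega
  have e2 : (2 * Nat.pair (min i t) ⌊y * 2 ^ t⌋₊ + 1) / 2 = Nat.pair (min i t) ⌊y * 2 ^ t⌋₊ := by omega
  unfold Dpt
  rw [if_neg e1, e2, Nat.unpair_pair]
  simp only [xr_cast]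
  rw [min_eq_left (min_le_right i t), min_eq_left hb]
  apply dist_le_of
  · simp
  · push_cast
    have f1 := Nat.floor_le (show 0 ≤ y * 2 ^ t by have := hy.1; positivity)
    have f2 := Nat.lt_floor_add_one (y * 2 ^ t)
    have : y - ⌊y * 2 ^ t⌋₊ * (1 / 2 ^ t) = (y * 2 ^ t - ⌊y * 2 ^ t⌋₊) * (1 / 2 ^ t) := by
      field_simp
    rw [this, abs_mul, abs_of_nonneg (by linarith), abs_of_pos (by positivity)]
    apply mul_le_of_le_one_left (by positivity)
    linarith

theorem CC_near (t : ℕ) {x : ℝ} (hx : x ∈ CC) : ∃ i, |x - xr (min i t)| ≤ 1 / 2 ^ t := by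
  have key : ∀ x, 1/2 ≤ x → x ≤ xr t → |x - xr t| ≤ 1 / 2 ^ t := by
    intro x h1 h2
    have h3 : xr t = 1/2 + 1 / 2 ^ (t + 2) := rfl
    have := half_pow_le (show t ≤ t + 2 by omega)
    rw [abs_le]; constructor <;> linarith [show (0:ℝ) < 1 / 2 ^ t by positivity]
  rcases hx with rfl | ⟨i, rfl⟩
  · refine ⟨t, ?_⟩
    rw [min_self]
    exact key _ le_rfl (xr_mem t).1.le
  · refine ⟨i, ?_⟩
    rcases le_or_gt i t with h | h
    · rw [min_eq_left h]; simp
    · rw [min_eq_right h.le]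
      exact key _ (xr_mem i).1.le (xr_lt h).le

theorem near_tooth (t : ℕ) {x x' y : ℝ} (hx : x ∈ CC) (hxx : |x' - x| ≤ 1 / 2 ^ t)
    (hy : y ∈ Icc (0:ℝ) 1) :
    ∃ k < Nn t, dist (x', y) (((Dpt t k).1 : ℝ), ((Dpt t k).2 : ℝ)) ≤ 4 / 2 ^ t := by
  obtain ⟨i, hi⟩ := CC_near t hx
  obtain ⟨k, hk, hd⟩ := tooth_approx t i y hy
  refine ⟨k, hk, ?_⟩
  have h1 : dist (x', y) (x, y) ≤ 1 / 2 ^ t := dist_le_of hxx (by simp)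
  have h2 : dist (x, y) (xr (min i t), y) ≤ 1 / 2 ^ t := dist_le_of hi (by simp)
  have h3 := dist_triangle4 (x', y) (x, y) (xr (min i t), y) (((Dpt t k).1 : ℝ), ((Dpt t k).2 : ℝ))
  have : (0:ℝ) < 1 / 2 ^ t := by positivity
  rw [four_div]
  linarith

theorem xr_CC (i : ℕ) : xr i ∈ CC := Or.inr ⟨i, rfl⟩

theorem near_of {t i : ℕ} {x : ℝ} (h1 : xr i < x) (h2 : x < xr i + 1 / 2 ^ (t + 3)) :
    |x - xr i| ≤ 1 / 2 ^ t := by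
  have := half_pow_le (show t ≤ t + 3 by omega)
  rw [abs_le]; constructor <;> linarith [show (0:ℝ) < 1 / 2 ^ t by positivity]

theorem gx_mem (t k : ℕ) : ((gx t k : ℚ) : ℝ) ∈ Icc (0:ℝ) 1 := by
  unfold gx
  rw [Rat.cast_mul, Rat.cast_natCast]
  have h : ((min (k / 2) (2 ^ (2 * t + 6)) : ℕ) : ℝ) ≤ 2 ^ (2 * t + 6) := by
    exact_mod_cast min_le_right _ _
  have hp : (0:ℝ) < 2 ^ (2 * t + 6) := by positivity
  push_cast only [Rat.cast_div, Rat.cast_one, Rat.cast_pow, Rat.cast_ofNat]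
  constructor
  · positivity
  · rw [mul_one_div, div_le_one hp]; exact h

theorem KK_computable : IsComputableClosed KK := by
  refine isComputableClosed_of_approx KK KK_compact.isClosed Dpt Nn computable_Dpt computable_Nn ?_ ?_
  · intro t k hk
    have hp : (0:ℝ) < 1 / 2 ^ t := by positivity
    unfold Dpt
    split_ifs with h
    · simp only [ft_cast]
      rcases ff_eq_ft_or t (gx t k) with h1 | ⟨i, h1, h2⟩
      · refine ⟨_, KK_graph (gx_mem t k), ?_⟩
        rw [h1, dist_self]; positivity
      · refine ⟨_, KK_tooth (xr_CC i) ⟨ft_nonneg t (gx t k), ft_le_one t (gx t k)⟩, ?_⟩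
        have := near_of h1 h2
        rw [abs_sub_comm] at this
        rw [four_div]
        apply dist_le_of
        · linarith
        · rw [sub_self, abs_zero]; linarith
    · refine ⟨_, ?_, (dist_self _).trans_le (by positivity)⟩
      simp only [xr_cast]
      apply KK_tooth (xr_CC _)
      have h : ((min (k / 2).unpair.2 (2 ^ t) : ℕ) : ℝ) ≤ 2 ^ t := by
        exact_mod_cast min_le_right _ _
      have hp : (0:ℝ) < 2 ^ t := by positivity
      rw [Rat.cast_mul, Rat.cast_natCast]
      push_cast only [Rat.cast_div, Rat.cast_one, Rat.cast_pow, Rat.cast_ofNat]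
      constructor
      · positivity
      · rw [mul_one_div, div_le_one hp]; exact h
  · rintro t ⟨x, y⟩ ⟨hx, h | ⟨h1, h2⟩⟩
    · simp only [] at h hx
      subst h
      rcases ff_eq_ft_or t x with h1 | ⟨i, h1, h2⟩
      · have hp : (0:ℝ) < 2 ^ (2 * t + 6) := by positivity
        have hb : ⌊x * 2 ^ (2 * t + 6)⌋₊ ≤ 2 ^ (2 * t + 6) := by
          apply Nat.floor_le_of_le
          push_cast
          nlinarith [hx.2]
        refine ⟨2 * ⌊x * 2 ^ (2 * t + 6)⌋₊, Nn_bound1 t _ hb, ?_⟩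
        unfold Dpt
        rw [if_pos (by omega)]
        simp only [ft_cast]
        have hg : |x - ((gx t (2 * ⌊x * 2 ^ (2 * t + 6)⌋₊) : ℚ) : ℝ)| ≤ 1 / 2 ^ (2 * t + 6) := by
          unfold gx
          rw [show 2 * ⌊x * 2 ^ (2 * t + 6)⌋₊ / 2 = ⌊x * 2 ^ (2 * t + 6)⌋₊ by omega, min_eq_left hb]
          push_cast
          have f1 := Nat.floor_le (show 0 ≤ x * 2 ^ (2 * t + 6) by have := hx.1; positivity)
          have f2 := Nat.lt_floor_add_one (x * 2 ^ (2 * t + 6))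
          have : x - ⌊x * 2 ^ (2 * t + 6)⌋₊ * (1 / 2 ^ (2 * t + 6)) =
              (x * 2 ^ (2 * t + 6) - ⌊x * 2 ^ (2 * t + 6)⌋₊) * (1 / 2 ^ (2 * t + 6)) := by
            field_simp
          rw [this, abs_mul, abs_of_nonneg (by linarith), abs_of_pos (by positivity)]
          apply mul_le_of_le_one_left (by positivity)
          linarith
        have hp2 : (0:ℝ) < 1 / 2 ^ t := by positivity
        rw [four_div]
        apply dist_le_of
        · have := half_pow_le (show t ≤ 2 * t + 6 by omega)
          linarith
        · rw [h1]
          refine (ft_lip t _ _).trans ?_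
          have : (2:ℝ) ^ (t + 3) * (1 / 2 ^ (2 * t + 6)) = 1 / 2 ^ t / 8 := by
            rw [show 2 * t + 6 = (t + 3) + (t + 3) by ring, pow_add]
            field_simp
            rw [pow_add]
            ring
          have h3 : (2:ℝ) ^ (t + 3) * |x - ((gx t (2 * ⌊x * 2 ^ (2 * t + 6)⌋₊) : ℚ) : ℝ)| ≤
            (2:ℝ) ^ (t + 3) * (1 / 2 ^ (2 * t + 6)) := by gcongr
          linarith
      · exact near_tooth t (xr_CC i) (near_of h1 h2) ⟨ff_nonneg x, ff_le_one x⟩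
    · exact near_tooth t h1 (by simp) h2

end CompK


section Main

open Nat.Partrec (Code)
open scoped unitInterval

theorem seg_mem {y w : ℝ} (hy : y ∈ Icc (0:ℝ) 1) (hw : w ∈ Icc (0:ℝ) 1) (t : I) :
    (1 - (t:ℝ)) * y + t * w ∈ Icc (0:ℝ) 1 := by
  obtain ⟨h1, h2⟩ := t.2
  obtain ⟨h3, h4⟩ := hy
  obtain ⟨h5, h6⟩ := hw
  constructor <;> nlinarith [mul_nonneg h1 h5, mul_nonneg (sub_nonneg.2 h2) h3]

theorem KK_H1 (t : I) {z : ℝ × ℝ} (hz : z ∈ KK) :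
    (z.1, (1 - (t:ℝ)) * z.2 + t * ff z.1) ∈ KK := by
  obtain ⟨hx, h | ⟨h1, h2⟩⟩ := hz
  · refine ⟨hx, Or.inl ?_⟩
    simp only [h]; ring
  · exact ⟨hx, Or.inr ⟨h1, seg_mem h2 ⟨ff_nonneg _, ff_le_one _⟩ t⟩⟩

theorem KK_H2 (t : I) {z : ℝ × ℝ} (hz : z ∈ KK) :
    ((1 - (t:ℝ)) * z.1, ff ((1 - (t:ℝ)) * z.1)) ∈ KK := by
  apply KK_graph
  have := seg_mem hz.1 (w := 0) ⟨le_rfl, zero_le_one⟩ t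
  simpa using this

/-- retraction onto the graph -/
noncomputable def KKr : C(KK, KK) where
  toFun z := ⟨(z.1.1, ff z.1.1), KK_graph z.2.1⟩
  continuous_toFun := by have := ff_continuous; fun_prop

theorem KK_contractible : ContractibleSpace KK := by
  have hc := ff_continuous
  rw [contractible_iff_id_nullhomotopic]
  refine ⟨⟨(0, ff 0), KK_graph (by norm_num)⟩, ?_⟩
  have h1 : (ContinuousMap.id KK).Homotopic KKr := by
    refine ⟨{ toFun := fun p => ⟨_, KK_H1 p.1 p.2.2⟩, continuous_toFun := ?_,
              map_zero_left := ?_, map_one_left := ?_ }⟩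
    · fun_prop
    · intro z; apply Subtype.ext; simp
    · intro z; apply Subtype.ext; simp [KKr]
  refine h1.trans ?_
  refine ⟨{ toFun := fun p => ⟨_, KK_H2 p.1 p.2.2⟩, continuous_toFun := ?_,
              map_zero_left := ?_, map_one_left := ?_ }⟩
  · fun_prop
  · intro z; apply Subtype.ext; simp [KKr]
  · intro z; apply Subtype.ext; simp

theorem mid_between (i : ℕ) : xr (i + 1) < mid i ∧ mid i < xr i := by
  unfold mid xr
  have b2 := half_pow_succ (i + 1 + 2)
  have e2 : i + 1 + 2 + 1 = i + 4 := rfl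
  rw [e2] at b2
  have b3 := half_pow_succ (i + 2)
  have e3 : i + 2 + 1 = i + 1 + 2 := rfl
  rw [e3] at b3
  have b0 : (0:ℝ) < 1 / 2 ^ (i + 2) := by positivity
  constructor <;> linarith

theorem mid_notMem (i : ℕ) : mid i ∉ CC := by
  obtain ⟨h1, h2⟩ := mid_between i
  rintro (h | ⟨j, h⟩)
  · have := (xr_mem (i + 1)).1
    linarith
  · rcases le_or_gt j i with hj | hj
    · have : xr i ≤ xr j := by
        rcases hj.lt_or_eq with hj | rfl
        · exact (xr_lt hj).le
        · exact le_rfl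
      linarith
    · have : xr j ≤ xr (i + 1) := by
        rcases (Nat.succ_le_of_lt hj).lt_or_eq with hj | hj
        · exact (xr_lt hj).le
        · exact hj ▸ le_rfl
      linarith

noncomputable def yr (n : ℕ) : ℝ := 1 / 2 ^ (n + 2)

theorem yr_cast (n : ℕ) : ((yq n : ℚ) : ℝ) = yr n := by unfold yq yr; push_cast; rfl

theorem yr_pos (n : ℕ) : 0 < yr n := by unfold yr; positivity

theorem wq_cast (s : ℕ) : ((wq s : ℚ) : ℝ) = 1 / 2 ^ (s + 3) := by unfold wq; push_cast; rfl

theorem exists_act {s : ℕ} (hs : Ev s) : ∃ s', Act s' ∧ sN s' = sN s := by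
  classical
  have hex : ∃ s', Ev s' ∧ sN s' = sN s := ⟨s, hs, rfl⟩
  refine ⟨Nat.find hex, ⟨(Nat.find_spec hex).1, fun s' h1 h2 => ?_⟩, (Nat.find_spec hex).2⟩
  exact Nat.find_min hex h1 ⟨h2.1, h2.2.trans (Nat.find_spec hex).2⟩

/-- an active tent crosses height `y_n` -/
theorem act_cross {s : ℕ} (hs : Act s) : ∃ x, xr (sI s) ≤ x ∧ x ≤ xr (sI s) + 1 / 2 ^ (s + 3) ∧
    ff x = yr (sN s) := by
  have hw : (0:ℝ) < 1 / 2 ^ (s + 3) := by positivity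
  have he := half_pow_succ (s + 3)
  have hpeak : 1 / 2 ^ (sN s + 1) ≤ ff (xr (sI s) + 1 / 2 ^ (s + 3 + 1)) := by
    have h1 : cf s * tent s (xr (sI s) + 1 / 2 ^ (s + 3 + 1)) ≤ ff (xr (sI s) + 1 / 2 ^ (s + 3 + 1)) :=
      (term_summable _).le_tsum s fun j _ => term_nonneg j _
    have h2 : tent s (xr (sI s) + 1 / 2 ^ (s + 3 + 1)) = 1 := by
      unfold tent
      have : (2:ℝ) ^ (s + 4) * (xr (sI s) + 1 / 2 ^ (s + 3 + 1) - xr (sI s)) = 1 := by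
        rw [add_sub_cancel_left]; field_simp
      rw [this]; norm_num
    have h3 : cf s = 1 / 2 ^ (sN s + 1) := by unfold cf; rw [if_pos hs]
    rw [h2, h3, mul_one] at h1
    exact h1
  have hIV := intermediate_value_Icc (show xr (sI s) ≤ xr (sI s) + 1 / 2 ^ (s + 3 + 1) by rw [he]; linarith)
    ff_continuous.continuousOn
  rw [ff_xr] at hIV
  have hy : yr (sN s) ≤ 1 / 2 ^ (sN s + 1) := half_pow_le (by omega)
  obtain ⟨x, hx, hfx⟩ := hIV ⟨(yr_pos (sN s)).le, hy.trans hpeak⟩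
  exact ⟨x, hx.1, by rw [he] at hx; linarith [hx.2], hfx⟩

theorem main_contra (B : Set (ℝ × ℝ)) (hBK : B ⊆ KK) (hne : B.Nonempty) (hPi : IsPi01Closed B)
    (hconn : IsConnected B) (hlc : LocallyConnectedSpace B) (hd : hausdorffDist B KK < 1 / 8) :
    False := by
  have hfin : hausdorffEDist B KK ≠ ⊤ :=
    hausdorffEDist_ne_top_of_nonempty_of_bounded hne KK_nonempty
      (KK_compact.isBounded.subset hBK) KK_compact.isBounded
  have hproj : ∀ x ∈ Icc (1/8 : ℝ) (7/8), ∃ y, (x, y) ∈ B := by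
    obtain ⟨a, ha, had⟩ := exists_dist_lt_of_hausdorffDist_lt' (KK_graph (x := 0) (by norm_num)) hd hfin
    obtain ⟨b, hb, hbd⟩ := exists_dist_lt_of_hausdorffDist_lt' (KK_graph (x := 1) (by norm_num)) hd hfin
    have ha1 : a.1 < 1/8 := by
      have h1 : dist a.1 0 ≤ dist a (0, ff 0) := by rw [Prod.dist_eq]; exact le_max_left _ _
      rw [Real.dist_eq] at h1
      have := (abs_lt.1 (h1.trans_lt had)).2
      linarith
    have hb1 : 7/8 < b.1 := by
      have h1 : dist b.1 1 ≤ dist b (1, ff 1) := by rw [Prod.dist_eq]; exact le_max_left _ _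
      rw [Real.dist_eq] at h1
      have := (abs_lt.1 (h1.trans_lt hbd)).1
      linarith
    intro x hx
    have hp : IsPreconnected (Prod.fst '' B) := hconn.isPreconnected.image _ continuous_fst.continuousOn
    obtain ⟨z, hz, rfl⟩ := hp.ordConnected.out (mem_image_of_mem _ ha) (mem_image_of_mem _ hb)
      (⟨by linarith [hx.1], by linarith [hx.2]⟩ : x ∈ Icc a.1 b.1)
    exact ⟨z.2, hz⟩
  have hgraph : ∀ x ∈ Icc (1/8 : ℝ) (7/8), x ∉ CC → (x, ff x) ∈ B := by
    intro x hx hxC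
    obtain ⟨y, hy⟩ := hproj x hx
    rcases (hBK hy).2 with h | h
    · rwa [← (show y = ff x from h)]
    · exact absurd h.1 hxC
  obtain ⟨W, hW, hBW⟩ := hPi
  obtain ⟨n, hn⟩ := exists_index W hW
  have hmemB : ∀ z, z ∈ B ↔ ∀ c, W c → z ∉ ballOfCode c := by
    intro z
    rw [hBW]
    simp
  have hnoEv : ∀ s, Ev s → sN s ≠ n := by
    intro s0 hs0 hsn0
    obtain ⟨s, hs, hsn⟩ := exists_act hs0
    rw [hsn0] at hsn
    obtain ⟨x, hx1, hx2, hfx⟩ := act_cross hs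
    have hxm := xr_mem (sI s)
    have hw8 := half_pow_le (show 3 ≤ s + 3 by omega)
    norm_num at hw8
    have hx : x ∈ Icc (1/8 : ℝ) (7/8) := ⟨by linarith, by norm_num at hx2; linarith⟩
    have hxC : x ∉ CC := by
      intro h
      have := ff_CC h
      have := yr_pos (sN s)
      linarith
    have hB := hgraph x hx hxC
    obtain ⟨⟨_, hhalt, e1, e2, e3⟩, _⟩ := hs
    have hdom : ((Denumerable.ofNat Code n).eval (sE s)).Dom := by
      unfold haltT at hhalt
      rw [Option.isSome_iff_exists, hsn] at hhalt
      obtain ⟨v, hv⟩ := hhalt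
      exact (Nat.Partrec.Code.evaln_sound hv).1
    obtain ⟨c, hc, hWc⟩ := (hn _).2 hdom
    have hdc : dC (sE s) = c := by unfold dC; rw [hc]; rfl
    rw [hdc, ← Rat.cast_lt (K := ℝ)] at e1 e2 e3
    push_cast [xr_cast, wq_cast, yr_cast] at e1 e2 e3
    refine (hmemB _).1 hB c hWc ?_
    change dist _ _ < _
    rw [hfx, Prod.dist_eq, Real.dist_eq, Real.dist_eq]
    rw [abs_lt] at e1 e2
    refine max_lt (abs_lt.2 ⟨?_, ?_⟩) e3
    · simp only []; linarith
    · simp only []; linarith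
  have htooth : ∀ i, n ≤ i → (xr i, yr n) ∈ B := by
    intro i hi
    rw [hmemB]
    intro c hWc hball
    change dist _ _ < _ at hball
    rw [Prod.dist_eq, Real.dist_eq, Real.dist_eq, max_lt_iff] at hball
    obtain ⟨hb1, hb2⟩ := hball
    simp only [] at hb1 hb2
    have hdom := (hn (encC c)).1 ⟨c, decC_encC c, hWc⟩
    obtain ⟨v, hv⟩ := Part.dom_iff_mem.1 hdom
    obtain ⟨k0, hk0⟩ := Nat.Partrec.Code.evaln_complete.1 hv
    obtain ⟨k1, hk1⟩ := exists_pow_lt_of_lt_one (sub_pos.2 hb1) (show (1/2 : ℝ) < 1 by norm_num)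
    set k := max k0 k1 with hk
    set s := Nat.pair n (Nat.pair i (Nat.pair (encC c) k)) with hs
    have s1 : sN s = n := by simp [sN, hs]
    have s2 : sI s = i := by simp [sI, hs]
    have s3 : sE s = encC c := by simp [sE, hs]
    have s4 : sK s = k := by simp [sK, hs]
    have s5 : k ≤ s := (Nat.right_le_pair _ _).trans ((Nat.right_le_pair _ _).trans (Nat.right_le_pair _ _))
    have hdc : dC (encC c) = c := by unfold dC; rw [decC_encC]; rfl
    have hwk : (1:ℝ) / 2 ^ (s + 3) ≤ (1/2) ^ k1 := by
      have := half_pow_le (show k1 ≤ s + 3 from ((le_max_right k0 k1).trans s5).trans (by omega))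
      rwa [one_div_pow]
    have hwp : (0:ℝ) < 1 / 2 ^ (s + 3) := by positivity
    refine hnoEv s ⟨?_, ?_, ?_, ?_, ?_⟩ s1
    · rw [s1, s2]; exact hi
    · unfold haltT
      rw [s1, s3, s4, Option.isSome_iff_exists]
      exact ⟨v, Nat.Partrec.Code.evaln_mono (le_max_left k0 k1) hk0⟩
    · rw [s2, s3, hdc, ← Rat.cast_lt (K := ℝ)]
      push_cast [xr_cast]
      exact hb1
    · rw [s2, s3, hdc, ← Rat.cast_lt (K := ℝ)]
      push_cast [xr_cast, wq_cast]
      have : xr i + 1 / 2 ^ (s + 3) - (c.1.1 : ℝ) = (xr i - c.1.1) + 1 / 2 ^ (s + 3) := by ring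
      rw [this]
      refine (abs_add_le _ _).trans_lt ?_
      rw [abs_of_pos hwp]
      linarith
    · rw [s1, s3, hdc, ← Rat.cast_lt (K := ℝ)]
      push_cast [yr_cast]
      exact hb2
  have hBcl : IsClosed B := by
    rw [hBW, ← compl_eq_univ_sdiff, isClosed_compl_iff]
    refine isOpen_biUnion fun c _ => ?_
    exact isOpen_ball
  have htend : Filter.Tendsto (fun i => (xr i, yr n)) Filter.atTop (nhds ((1/2 : ℝ), yr n)) :=
    xr_tendsto.prodMk_nhds tendsto_const_nhds
  have hpB : ((1/2 : ℝ), yr n) ∈ B :=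
    hBcl.mem_of_tendsto htend ((Filter.eventually_ge_atTop n).mono htooth)
  rw [locallyConnectedSpace_iff_subsets_isOpen_isConnected] at hlc
  have hU : {z : B | dist z.1 ((1/2 : ℝ), yr n) < yr n} ∈ nhds (⟨_, hpB⟩ : B) := by
    refine IsOpen.mem_nhds ?_ ?_
    · exact isOpen_lt (by fun_prop) continuous_const
    · simp [yr_pos]
  obtain ⟨V, hVU, hVo, hpV, hVc⟩ := hlc _ _ hU
  obtain ⟨O, hO, rfl⟩ := isOpen_induced_iff.1 hVo
  have hev := htend.eventually (hO.mem_nhds hpV)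
  obtain ⟨i0, hi0⟩ := Filter.eventually_atTop.1 hev
  set i := max i0 n
  have hVi : ∀ j, i ≤ j → xr j ∈ (fun z : B => z.1.1) '' (Subtype.val ⁻¹' O) := by
    intro j hj
    refine ⟨⟨_, htooth j ((le_max_right _ _).trans hj)⟩, hi0 j ((le_max_left _ _).trans hj), rfl⟩
  have hpc : IsPreconnected ((fun z : B => z.1.1) '' (Subtype.val ⁻¹' O)) :=
    hVc.isPreconnected.image _ (by fun_prop)
  obtain ⟨h1, h2⟩ := mid_between i
  obtain ⟨z, hz, hzm⟩ := hpc.ordConnected.out (hVi (i + 1) (by omega)) (hVi i le_rfl)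
    (⟨h1.le, h2.le⟩ : mid i ∈ Icc (xr (i + 1)) (xr i))
  simp only [] at hzm
  have hz0 : z.1.2 = 0 := by
    rcases (hBK z.2).2 with h | h
    · rw [h, hzm, ff_mid]
    · rw [hzm] at h; exact absurd h.1 (mid_notMem i)
  have hzd : dist z.1 ((1/2 : ℝ), yr n) < yr n := hVU hz
  rw [Prod.dist_eq, max_lt_iff, Real.dist_eq, Real.dist_eq] at hzd
  have := hzd.2
  simp only [hz0, zero_sub, abs_neg, abs_of_pos (yr_pos n)] at this
  exact lt_irrefl _ this

end Main

theorem exists_contractible_computable_set_without_pi01_peano_subsets :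
    ∃ K : Set (ℝ × ℝ), K.Nonempty ∧ IsComputableClosed K ∧
      K ⊆ Set.Icc (0:ℝ) 1 ×ˢ Set.Icc (0:ℝ) 1 ∧ ContractibleSpace ↥K ∧
      ∃ ε : ℝ, 0 < ε ∧ ∀ B : Set (ℝ × ℝ), B ⊆ K → B.Nonempty → IsPi01Closed B →
        IsConnected B → LocallyConnectedSpace ↥B → ε ≤ Metric.hausdorffDist B K := by
  refine ⟨KK, KK_nonempty, KK_computable, KK_sub, KK_contractible, 1 / 8, by norm_num, ?_⟩
  intro B h1 h2 h3 h4 h5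
  by_contra h
  exact main_contra B h1 h2 h3 h4 h5 (not_le.1 h)
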